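/- arXiv:2512.11085 — 4 statements merged into one kernel-verified Lean document; each statement's English description precedes it below -/
import Mathlib

section
/- Let d ≥ 2 and let Ξ(u) = -(2/(d-1)) ∫_{S^{d-1}} (Σ_{i=1}^d u_i z_i²)^{-(d-1)/2} dη(z), where η is the uniform probability measure on the unit sphere S^{d-1} and u ∈ ℝ_{>0}^d. Then for every u ∈ ℝ_{>0}^d and every unit vector w ∈ ℝ^d, the quadratic form of the Hessian satisfies wᵀ∇²Ξ(u)w = -((d+1)/2) ∫_{S^{d-1}} (Σ_i w_i z_i²)² (Σ_k u_k z_k²)^{-(d+3)/2} dη(z) < 0; in particular Ξ is strictly concave on ℝ_{>0}^d. -/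
/-! For `z` on the sphere, `ℓ_z u = ∑ i, u i * z i ^ 2` is a linear form in `u`, positive on the
positive orthant, and `Ξ u = ∫ φ (ℓ_z u) dη(z)` with `φ t = -(t ^ (-a) / a)`, `a = (d - 1) / 2`.
Differentiating twice under the integral gives `wᵀ ∇²Ξ(u) w = ∫ φ'' (ℓ_z u) * (ℓ_z w) ^ 2 dη(z)`,
where `φ'' t = -(a + 1) * t ^ (-a - 2)` is negative. The strict inequality, and the strict concavity
inherited from `φ`, hold because the forms `ℓ_z` separate points and `η` charges every nonempty open
set. That `η` does so, and that the Hausdorff measure it normalizes is finite, is seen by comparing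
with Lebesgue measure through stereographic projection, which is locally bi-Lipschitz.
-/

open MeasureTheory

/-- The uniform (normalized Hausdorff) probability measure on the unit sphere
`S^{d-1} ⊆ ℝ^d`. -/
noncomputable def sphereUniform (d : ℕ) : Measure (EuclideanSpace ℝ (Fin d)) :=
  ((μH[(d : ℝ) - 1] (Metric.sphere (0 : EuclideanSpace ℝ (Fin d)) 1))⁻¹ : ENNReal) •
    (μH[(d : ℝ) - 1]).restrict (Metric.sphere (0 : EuclideanSpace ℝ (Fin d)) 1)

/-- The function `Ξ(u) = -(2/(d-1)) ∫_{S^{d-1}} (Σ_i u_i z_i²)^{-(d-1)/2} dη(z)`. -/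
noncomputable def Xi (d : ℕ) (u : EuclideanSpace ℝ (Fin d)) : ℝ :=
  -(2 / ((d : ℝ) - 1)) *
    ∫ z, (∑ i, u i * z i ^ 2) ^ (-((d : ℝ) - 1) / 2) ∂(sphereUniform d)

open Filter Set Topology Metric Module

section IntegralOverCompactSpace

variable {X : Type*} [TopologicalSpace X] [CompactSpace X] [MeasurableSpace X]
  [OpensMeasurableSpace X] {μ : Measure X} [IsFiniteMeasure μ]

lemma integrable_of_continuous {G : Type*} [NormedAddCommGroup G] {f : X → G}
    (hf : Continuous f) : Integrable f μ :=
  hf.integrable_of_hasCompactSupport (.of_compactSpace f)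

lemma integral_lt_integral_of_continuous [μ.IsOpenPosMeasure] {f g : X → ℝ} (hf : Continuous f)
    (hg : Continuous g) (hle : f ≤ g) (hlt : ∃ x, f x < g x) : ∫ x, f x ∂μ < ∫ x, g x ∂μ := by
  obtain ⟨x, hx⟩ := hlt
  rw [← sub_pos, ← integral_sub (integrable_of_continuous hg) (integrable_of_continuous hf)]
  exact integral_pos_of_integrable_nonneg_nonzero (hg.sub hf)
    (integrable_of_continuous (hg.sub hf)) (fun y ↦ sub_nonneg.2 (hle y)) (sub_pos.2 hx).ne'

variable {E G : Type*} [NormedAddCommGroup E] [NormedSpace ℝ E] [NormedAddCommGroup G]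
  [NormedSpace ℝ G]

lemma hasFDerivAt_integral_of_continuousOn {F : E → X → G} {F' : E → X → E →L[ℝ] G}
    {U : Set E} (hU : IsOpen U) (hF : ∀ v ∈ U, Continuous (F v))
    (hF' : ContinuousOn (Function.uncurry F') (U ×ˢ univ))
    (hderiv : ∀ v ∈ U, ∀ x, HasFDerivAt (F · x) (F' v x) v) {u : E} (hu : u ∈ U) :
    HasFDerivAt (fun v ↦ ∫ x, F v x ∂μ) (∫ x, F' u x ∂μ) u := by
  have hF'u : Continuous (F' u) :=
    hF'.comp_continuous (by fun_prop : Continuous fun x ↦ (u, x)) fun x ↦ ⟨hu, mem_univ x⟩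
  have hbound : ∀ᶠ v in 𝓝 u, ∀ x ∈ univ, ‖F' v x‖ < ‖F' u x‖ + 1 := by
    refine isCompact_univ.eventually_forall_of_forall_eventually fun x _ ↦ ?_
    have hcont : ContinuousAt (Function.uncurry F') (u, x) :=
      hF'.continuousAt (prod_mem_nhds (hU.mem_nhds hu) univ_mem)
    exact hcont.norm.eventually_lt
      ((hF'u.norm.add_const 1).continuousAt.comp continuousAt_snd) (lt_add_one _)
  refine hasFDerivAt_integral_of_dominated_of_fderiv_le (F := F) (F' := F')
    (bound := fun x ↦ ‖F' u x‖ + 1) (inter_mem (hU.mem_nhds hu) hbound) ?_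
    (integrable_of_continuous (hF u hu)) (integrable_of_continuous hF'u).aestronglyMeasurable
    (.of_forall fun x v hv ↦ (hv.2 x (mem_univ x)).le)
    (integrable_of_continuous (hF'u.norm.add_const 1))
    (.of_forall fun x v hv ↦ hderiv v hv.1 x)
  filter_upwards [hU.mem_nhds hu] with v hv
  exact (integrable_of_continuous (hF v hv)).aestronglyMeasurable

end IntegralOverCompactSpace

section LinearForms

variable {X : Type*} [TopologicalSpace X] [CompactSpace X]
  {E : Type*} [NormedAddCommGroup E] [NormedSpace ℝ E]
  {ℓ : X → E →L[ℝ] ℝ} {φ φ' φ'' : ℝ → ℝ} {s : Set ℝ}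

lemma isOpen_setOf_forall_apply_mem (hℓ : Continuous ℓ) (hs : IsOpen s) :
    IsOpen {v : E | ∀ x, ℓ x v ∈ s} := by
  have hcont : Continuous fun p : E × X ↦ ℓ p.2 p.1 :=
    (hℓ.comp continuous_snd).clm_apply continuous_fst
  refine isOpen_iff_mem_nhds.2 fun v hv ↦ ?_
  have hnear := isCompact_univ.eventually_forall_of_forall_eventually
    (P := fun v x ↦ ℓ x v ∈ s) fun x _ ↦ hcont.continuousAt (x := (v, x)) (hs.mem_nhds (hv x))
  exact hnear.mono fun v' hv' x ↦ hv' x (mem_univ x)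

variable [MeasurableSpace X] [OpensMeasurableSpace X] {μ : Measure X} [IsFiniteMeasure μ]

lemma hasFDerivAt_integral_comp_smul {G : Type*} [NormedAddCommGroup G] [NormedSpace ℝ G]
    (hℓ : Continuous ℓ) (hs : IsOpen s)
    (hφ : ∀ t ∈ s, HasDerivAt φ (φ' t) t) (hφ' : ContinuousOn φ' s) {g : X → G}
    (hg : Continuous g) {u : E} (hu : ∀ x, ℓ x u ∈ s) :
    HasFDerivAt (fun v ↦ ∫ x, φ (ℓ x v) • g x ∂μ)
      (∫ x, φ' (ℓ x u) • (ℓ x).smulRight (g x) ∂μ) u := by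
  have hg' : Continuous fun x ↦ (ℓ x).smulRight (g x) :=
    (ContinuousLinearMap.smulRightL ℝ E G).continuous₂.comp (hℓ.prodMk hg)
  have hφcont : ContinuousOn φ s := fun t ht ↦ (hφ t ht).continuousAt.continuousWithinAt
  refine hasFDerivAt_integral_of_continuousOn (isOpen_setOf_forall_apply_mem hℓ hs)
    (F' := fun v x ↦ φ' (ℓ x v) • (ℓ x).smulRight (g x)) (fun v hv ↦ ?_) ?_
    (fun v hv x ↦ ?_) hu
  · exact (hφcont.comp_continuous (by fun_prop) hv).smul hg
  · refine (hφ'.comp ?_ fun p hp ↦ hp.1 p.2).smul (hg'.comp continuous_snd).continuousOn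
    exact ((hℓ.comp continuous_snd).clm_apply continuous_fst).continuousOn
  · exact (((hφ _ (hv x)).comp_hasFDerivAt v (ℓ x).hasFDerivAt).smul_const (g x)).congr_fderiv
      (ContinuousLinearMap.ext fun w ↦ smul_assoc (φ' (ℓ x v)) (ℓ x w) (g x))

lemma iteratedFDeriv_two_integral_comp (hℓ : Continuous ℓ) (hs : IsOpen s)
    (hφ : ∀ t ∈ s, HasDerivAt φ (φ' t) t) (hφ' : ∀ t ∈ s, HasDerivAt φ' (φ'' t) t)
    (hφ'' : ContinuousOn φ'' s) {u : E} (hu : ∀ x, ℓ x u ∈ s) (w : Fin 2 → E) :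
    iteratedFDeriv ℝ 2 (fun v ↦ ∫ x, φ (ℓ x v) ∂μ) u w =
      ∫ x, φ'' (ℓ x u) * (ℓ x (w 0) * ℓ x (w 1)) ∂μ := by
  let gradient (v : E) : E →L[ℝ] ℝ := ∫ x, φ' (ℓ x v) • ℓ x ∂μ
  let hessian : E →L[ℝ] E →L[ℝ] ℝ := ∫ x, φ'' (ℓ x u) • (ℓ x).smulRight (ℓ x) ∂μ
  have hφ'cont : ContinuousOn φ' s := fun t ht ↦ (hφ' t ht).continuousAt.continuousWithinAt
  have hgradient : ∀ᶠ v in 𝓝 u, fderiv ℝ (fun v ↦ ∫ x, φ (ℓ x v) ∂μ) v = gradient v := by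
    filter_upwards [(isOpen_setOf_forall_apply_mem hℓ hs).mem_nhds hu] with v hv
    have h := hasFDerivAt_integral_comp_smul (μ := μ) hℓ hs hφ hφ'cont
      (continuous_const (y := (1 : ℝ))) hv
    have hone (x : X) : (ℓ x).smulRight (1 : ℝ) = ℓ x := by ext; simp
    simpa only [smul_eq_mul, mul_one, hone] using h.fderiv
  have hhessian : HasFDerivAt gradient hessian u :=
    hasFDerivAt_integral_comp_smul hℓ hs hφ' hφ'' hℓ hu
  have hcont : Continuous fun x ↦ φ'' (ℓ x u) • (ℓ x).smulRight (ℓ x) :=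
    (hφ''.comp_continuous (by fun_prop) hu).smul
      ((ContinuousLinearMap.smulRightL ℝ E (E →L[ℝ] ℝ)).continuous₂.comp (hℓ.prodMk hℓ))
  have hint := integrable_of_continuous (μ := μ) (G := E →L[ℝ] E →L[ℝ] ℝ) hcont
  rw [iteratedFDeriv_two_apply, EventuallyEq.fderiv_eq hgradient, hhessian.fderiv,
    ContinuousLinearMap.integral_apply hint,
    ContinuousLinearMap.integral_apply (hint.apply_continuousLinearMap (w 0))]
  rfl

lemma iteratedFDeriv_two_integral_comp_neg [μ.IsOpenPosMeasure] (hℓ : Continuous ℓ) (hs : IsOpen s)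
    (hφ : ∀ t ∈ s, HasDerivAt φ (φ' t) t) (hφ' : ∀ t ∈ s, HasDerivAt φ' (φ'' t) t)
    (hφ'' : ContinuousOn φ'' s) (hneg : ∀ t ∈ s, φ'' t < 0) {u w : E} (hu : ∀ x, ℓ x u ∈ s)
    (hw : ∃ x, ℓ x w ≠ 0) :
    iteratedFDeriv ℝ 2 (fun v ↦ ∫ x, φ (ℓ x v) ∂μ) u ![w, w] < 0 := by
  obtain ⟨x, hx⟩ := hw
  rw [iteratedFDeriv_two_integral_comp hℓ hs hφ hφ' hφ'' hu, ← integral_zero X ℝ (μ := μ)]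
  exact integral_lt_integral_of_continuous
    ((hφ''.comp_continuous (by fun_prop) hu).mul (by fun_prop)) continuous_const
    (fun y ↦ mul_nonpos_of_nonpos_of_nonneg (hneg _ (hu y)).le (mul_self_nonneg _))
    ⟨x, mul_neg_of_neg_of_pos (hneg _ (hu x)) (mul_self_pos.2 hx)⟩

lemma strictConcaveOn_integral_comp [μ.IsOpenPosMeasure] (hℓ : Continuous ℓ)
    (hsep : ∀ w ≠ 0, ∃ x, ℓ x w ≠ 0) (hφ : StrictConcaveOn ℝ s φ) (hφcont : ContinuousOn φ s) :
    StrictConcaveOn ℝ {v : E | ∀ x, ℓ x v ∈ s} fun v ↦ ∫ x, φ (ℓ x v) ∂μ := by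
  have hcont {v : E} (hv : ∀ x, ℓ x v ∈ s) : Continuous fun x ↦ φ (ℓ x v) :=
    hφcont.comp_continuous (by fun_prop) hv
  have hconvex : Convex ℝ {v : E | ∀ x, ℓ x v ∈ s} := by
    simp only [ofPred_forall]
    exact convex_iInter fun x ↦ hφ.1.linear_preimage (ℓ x).toLinearMap
  refine ⟨hconvex, fun v hv v' hv' hne a b ha hb hab ↦ ?_⟩
  have hsum : a • ∫ x, φ (ℓ x v) ∂μ + b • ∫ x, φ (ℓ x v') ∂μ =
      ∫ x, a • φ (ℓ x v) + b • φ (ℓ x v') ∂μ := by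
    rw [integral_add (integrable_of_continuous ((hcont hv).fun_const_smul a))
      (integrable_of_continuous ((hcont hv').fun_const_smul b)), integral_smul, integral_smul]
  rw [hsum]
  refine integral_lt_integral_of_continuous
    (((hcont hv).const_smul a).add ((hcont hv').const_smul b))
    (hcont (hconvex hv hv' ha.le hb.le hab)) (fun x ↦ ?_) ?_
  · simpa only [map_add, map_smul] using hφ.concaveOn.2 (hv x) (hv' x) ha.le hb.le hab
  · obtain ⟨x, hx⟩ := hsep (v - v') (sub_ne_zero.2 hne)
    rw [map_sub, sub_ne_zero] at hx
    refine ⟨x, ?_⟩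
    simpa only [map_add, map_smul] using hφ.2 (hv x) (hv' x) hx ha hb hab

end LinearForms

section HausdorffMeasure

variable {X Y : Type*} [EMetricSpace X] [MeasurableSpace X] [BorelSpace X] [EMetricSpace Y]
  [MeasurableSpace Y] [BorelSpace Y] {f : X → Y} {x : X} {r : ℝ}

lemma finiteAtFilter_hausdorffMeasure_of_lipschitzOnWith (hf : 𝓝 (f x) ≤ map f (𝓝 x))
    (hlip : ∃ K, ∃ s ∈ 𝓝 x, LipschitzOnWith K f s) (hr : 0 ≤ r)
    (hx : (μH[r] : Measure X).FiniteAtFilter (𝓝 x)) :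
    (μH[r] : Measure Y).FiniteAtFilter (𝓝 (f x)) := by
  obtain ⟨K, s, hs, hK⟩ := hlip
  obtain ⟨t, ht, htfin⟩ := hx
  refine ⟨f '' (s ∩ t), hf (image_mem_map (inter_mem hs ht)), ?_⟩
  calc μH[r] (f '' (s ∩ t)) ≤ K ^ r * μH[r] (s ∩ t) :=
        (hK.mono inter_subset_left).hausdorffMeasure_image_le hr
    _ ≤ K ^ r * μH[r] t := by gcongr; exact inter_subset_right
    _ < ⊤ := ENNReal.mul_lt_top (by finiteness) htfin

lemma hausdorffMeasure_pos_of_lipschitzOnWith [(μH[r] : Measure Y).IsOpenPosMeasure]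
    (hf : 𝓝 (f x) ≤ map f (𝓝 x)) (hlip : ∃ K, ∃ s ∈ 𝓝 x, LipschitzOnWith K f s) (hr : 0 ≤ r)
    {U : Set X} (hU : U ∈ 𝓝 x) : 0 < μH[r] U := by
  obtain ⟨K, s, hs, hK⟩ := hlip
  refine pos_of_mul_pos_right (a := (K : ENNReal) ^ r) ?_ zero_le
  calc 0 < μH[r] (f '' (s ∩ U)) :=
        Measure.measure_pos_of_mem_nhds _ (hf (image_mem_map (inter_mem hs hU)))
    _ ≤ K ^ r * μH[r] (s ∩ U) := (hK.mono inter_subset_left).hausdorffMeasure_image_le hr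
    _ ≤ K ^ r * μH[r] U := by gcongr; exact inter_subset_right

end HausdorffMeasure

section Sphere

variable {E : Type*} [NormedAddCommGroup E] [InnerProductSpace ℝ E]

lemma exists_lipschitzOnWith_stereographic {v : E} (hv : ‖v‖ = 1) {x : sphere (0 : E) 1}
    (hx : x ∈ (stereographic hv).source) :
    ∃ K, ∃ s ∈ 𝓝 x, LipschitzOnWith K (stereographic hv) s := by
  have hvx : innerSL ℝ v (x : E) ≠ 1 := fun h ↦
    hx (Subtype.ext ((inner_eq_one_iff_of_norm_eq_one hv (by simp)).1 h).symm)
  have hopen : IsOpen {y : E | innerSL ℝ v y ≠ 1} :=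
    isOpen_ne_fun (innerSL ℝ v).continuous continuous_const
  obtain ⟨K, t, ht, hK⟩ :=
    (contDiffOn_stereoToFun.contDiffAt (hopen.mem_nhds hvx)).exists_lipschitzOnWith
  exact ⟨K, (↑) ⁻¹' t, continuous_subtype_val.continuousAt.preimage_mem_nhds ht,
    fun y hy z hz ↦ hK hy hz⟩

lemma exists_lipschitzOnWith_stereographic_symm {v : E} (hv : ‖v‖ = 1) (y : (ℝ ∙ v)ᗮ) :
    ∃ K, ∃ s ∈ 𝓝 y, LipschitzOnWith K (stereographic hv).symm s := by
  have hsmooth : ContDiff ℝ 1 fun y : (ℝ ∙ v)ᗮ ↦ stereoInvFunAux v y :=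
    contDiff_stereoInvFunAux.comp (ℝ ∙ v)ᗮ.subtypeL.contDiff
  exact hsmooth.contDiffAt.exists_lipschitzOnWith

lemma mem_stereographic_neg_source (x : sphere (0 : E) 1) :
    x ∈ (stereographic (norm_eq_of_mem_sphere (-x))).source := by
  rw [stereographic_source, mem_compl_singleton_iff]
  exact ne_neg_of_mem_unit_sphere ℝ x

variable [FiniteDimensional ℝ E]

lemma finrank_orthogonal_span_singleton_eq_sub_one {v : E} (hv : v ≠ 0) :
    (finrank ℝ (ℝ ∙ v)ᗮ : ℝ) = finrank ℝ E - 1 := by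
  rw [← (ℝ ∙ v).finrank_add_finrank_orthogonal, finrank_span_singleton hv]
  push_cast
  ring

variable [MeasurableSpace E] [BorelSpace E]

instance isFiniteMeasure_hausdorffMeasure_sphere :
    IsFiniteMeasure (μH[finrank ℝ E - 1] : Measure (sphere (0 : E) 1)) := by
  have hlocal (x : sphere (0 : E) 1) :
      (μH[finrank ℝ E - 1] : Measure (sphere (0 : E) 1)).FiniteAtFilter (𝓝 x) := by
    have hv := norm_eq_of_mem_sphere (-x)
    set σ := stereographic hv
    have hx : x ∈ σ.source := mem_stereographic_neg_source x
    have hfinite := finiteAtFilter_hausdorffMeasure_of_lipschitzOnWith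
      (σ.symm.map_nhds_eq (σ.map_source hx)).ge
      (exists_lipschitzOnWith_stereographic_symm hv _) (Nat.cast_nonneg _)
      (Measure.finiteAt_nhds μH[finrank ℝ (ℝ ∙ ((-x : sphere (0 : E) 1) : E))ᗮ] _)
    rwa [finrank_orthogonal_span_singleton_eq_sub_one (ne_zero_of_mem_unit_sphere (-x)),
      σ.left_inv hx] at hfinite
  have : IsLocallyFiniteMeasure (μH[finrank ℝ E - 1] : Measure (sphere (0 : E) 1)) := ⟨hlocal⟩
  infer_instance

instance isOpenPosMeasure_hausdorffMeasure_sphere :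
    (μH[finrank ℝ E - 1] : Measure (sphere (0 : E) 1)).IsOpenPosMeasure := by
  refine ⟨fun U hU ⟨x, hxU⟩ ↦ ?_⟩
  have hv := norm_eq_of_mem_sphere (-x)
  rw [← finrank_orthogonal_span_singleton_eq_sub_one (ne_zero_of_mem_unit_sphere (-x))]
  have hx := mem_stereographic_neg_source x
  exact (hausdorffMeasure_pos_of_lipschitzOnWith
    ((stereographic hv).map_nhds_eq hx).ge (exists_lipschitzOnWith_stereographic hv hx)
    (Nat.cast_nonneg _) (hU.mem_nhds hxU)).ne'

end Sphere

section UniformMeasure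

/-- The uniform probability measure on the unit sphere of `ℝ^d`, as a measure on the subtype, so
that compactness of the sphere is available as an instance. -/
noncomputable def sphereProb (d : ℕ) : Measure (sphere (0 : EuclideanSpace ℝ (Fin d)) 1) :=
  ProbabilityTheory.cond μH[(d : ℝ) - 1] univ

instance isFiniteMeasure_sphereProb (d : ℕ) : IsFiniteMeasure (sphereProb d) := by
  unfold sphereProb
  infer_instance

instance isOpenPosMeasure_sphereProb (d : ℕ) : (sphereProb d).IsOpenPosMeasure := by
  have hfinite := isFiniteMeasure_hausdorffMeasure_sphere (E := EuclideanSpace ℝ (Fin d))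
  have hpos := isOpenPosMeasure_hausdorffMeasure_sphere (E := EuclideanSpace ℝ (Fin d))
  rw [finrank_euclideanSpace_fin] at hfinite hpos
  rw [sphereProb, ProbabilityTheory.cond, Measure.restrict_univ]
  exact Measure.isOpenPosMeasure_smul _ (ENNReal.inv_ne_zero.2 (measure_ne_top _ _))

lemma map_sphereProb {d : ℕ} (hd : 1 ≤ d) : (sphereProb d).map (↑) = sphereUniform d := by
  have hd' : 0 ≤ (d : ℝ) - 1 := sub_nonneg.2 (by exact_mod_cast hd)
  rw [sphereProb, ProbabilityTheory.cond, Measure.restrict_univ, Measure.map_smul,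
    isometry_subtype_coe.map_hausdorffMeasure (.inl hd'),
    ← isometry_subtype_coe.hausdorffMeasure_image (.inl hd'), image_univ, Subtype.range_coe]
  rfl

lemma integral_sphereUniform {d : ℕ} (hd : 1 ≤ d) (f : EuclideanSpace ℝ (Fin d) → ℝ) :
    ∫ z, f z ∂sphereUniform d = ∫ z, f z ∂sphereProb d := by
  rw [← map_sphereProb hd]
  exact (MeasurableEmbedding.subtype_coe isClosed_sphere.measurableSet).integral_map f

end UniformMeasure

section DiagonalForms

variable {ι : Type*}

lemma convex_positiveOrthant : Convex ℝ {u : EuclideanSpace ℝ ι | ∀ i, 0 < u i} := by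
  simp only [ofPred_forall]
  exact convex_iInter fun i ↦
    (convex_Ioi 0).linear_preimage (EuclideanSpace.proj (𝕜 := ℝ) i).toLinearMap

variable [Fintype ι]

/-- The diagonal quadratic form `∑ i, u i * z i ^ 2` evaluated at `z`, as a linear form in its
coefficients `u`. -/
noncomputable def diagEval (z : EuclideanSpace ℝ ι) : EuclideanSpace ℝ ι →L[ℝ] ℝ :=
  ∑ i, (z i ^ 2) • EuclideanSpace.proj i

lemma diagEval_apply (z u : EuclideanSpace ℝ ι) : diagEval z u = ∑ i, u i * z i ^ 2 := by
  simp [diagEval, mul_comm]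

lemma continuous_diagEval : Continuous (diagEval (ι := ι)) := by
  unfold diagEval
  fun_prop

lemma diagEval_pos {z u : EuclideanSpace ℝ ι} (hz : z ≠ 0) (hu : ∀ i, 0 < u i) :
    0 < diagEval z u := by
  obtain ⟨i, hi⟩ : ∃ i, z i ≠ 0 := by
    by_contra! h
    exact hz (PiLp.ext h)
  rw [diagEval_apply]
  exact Finset.sum_pos' (fun j _ ↦ mul_nonneg (hu j).le (sq_nonneg _))
    ⟨i, Finset.mem_univ i, mul_pos (hu i) (sq_pos_of_ne_zero hi)⟩

lemma exists_diagEval_ne_zero {w : EuclideanSpace ℝ ι} (hw : w ≠ 0) :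
    ∃ z : sphere (0 : EuclideanSpace ℝ ι) 1, diagEval (z : EuclideanSpace ℝ ι) w ≠ 0 := by
  classical
  obtain ⟨i, hi⟩ : ∃ i, w i ≠ 0 := by
    by_contra! h
    exact hw (PiLp.ext h)
  refine ⟨⟨EuclideanSpace.single i 1, by simp⟩, ?_⟩
  simpa [diagEval_apply, Pi.single_apply] using hi

end DiagonalForms

section PowerProfile

/-- The primitive `-t ^ (-a) / a` of the power `t ^ (-a - 1)` on `(0, ∞)`, for `a ≠ 0`. -/
noncomputable def powerProfile (a t : ℝ) : ℝ := -(a⁻¹ * t ^ (-a))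

variable {a t : ℝ}

lemma hasDerivAt_powerProfile (ha : a ≠ 0) (ht : 0 < t) :
    HasDerivAt (powerProfile a) (t ^ (-a - 1)) t := by
  have h := ((Real.hasDerivAt_rpow_const (p := -a) (.inl ht.ne')).const_mul a⁻¹).neg
  rwa [← mul_assoc, mul_neg, inv_mul_cancel₀ ha, neg_one_mul, neg_neg] at h

lemma hasDerivAt_rpow_neg_sub_one (ht : 0 < t) :
    HasDerivAt (fun t ↦ t ^ (-a - 1)) (-(a + 1) * t ^ (-a - 2)) t := by
  convert Real.hasDerivAt_rpow_const (p := -a - 1) (.inl ht.ne') using 2 <;> ring_nf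

lemma continuousOn_powerProfile (ha : a ≠ 0) : ContinuousOn (powerProfile a) (Ioi 0) :=
  fun _ ht ↦ (hasDerivAt_powerProfile ha ht).continuousAt.continuousWithinAt

lemma continuousOn_mul_rpow_neg_sub_two :
    ContinuousOn (fun t ↦ -(a + 1) * t ^ (-a - 2)) (Ioi 0) :=
  continuousOn_const.mul (continuousOn_id.rpow_const fun _ ht ↦ .inl ht.ne')

lemma strictConcaveOn_powerProfile (ha : a ≠ 0) (ha' : -1 < a) :
    StrictConcaveOn ℝ (Ioi 0) (powerProfile a) := by
  refine StrictAntiOn.strictConcaveOn_of_deriv (convex_Ioi 0) (continuousOn_powerProfile ha) ?_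
  rw [interior_Ioi]
  refine StrictAntiOn.congr (fun x hx y _ hxy ↦ ?_)
    fun t ht ↦ (hasDerivAt_powerProfile ha ht).deriv.symm
  exact Real.rpow_lt_rpow_of_neg hx hxy (by linarith)

end PowerProfile

section SphereIntegral

variable {ι : Type*} [Fintype ι] {μ : Measure (sphere (0 : EuclideanSpace ℝ ι) 1)}
  [IsFiniteMeasure μ] {a : ℝ}

lemma iteratedFDeriv_two_integral_powerProfile (ha : a ≠ 0) {u : EuclideanSpace ℝ ι}
    (hu : ∀ i, 0 < u i) (w : EuclideanSpace ℝ ι) :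
    iteratedFDeriv ℝ 2 (fun v ↦ ∫ z, powerProfile a (diagEval z v) ∂μ) u ![w, w] =
      -(a + 1) * ∫ z, diagEval z w ^ 2 * diagEval z u ^ (-a - 2) ∂μ := by
  rw [iteratedFDeriv_two_integral_comp (continuous_diagEval.comp continuous_subtype_val) isOpen_Ioi
    (fun _ ↦ hasDerivAt_powerProfile ha) (fun _ ↦ hasDerivAt_rpow_neg_sub_one)
    continuousOn_mul_rpow_neg_sub_two fun z ↦ diagEval_pos (ne_zero_of_mem_unit_sphere z) hu,
    ← integral_const_mul]
  refine integral_congr_ae (.of_forall fun z ↦ ?_)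
  simp only [Matrix.cons_val_zero, Matrix.cons_val_one]
  ring

variable [μ.IsOpenPosMeasure]

lemma iteratedFDeriv_two_integral_powerProfile_neg (ha : a ≠ 0) (ha' : -1 < a)
    {u w : EuclideanSpace ℝ ι} (hu : ∀ i, 0 < u i) (hw : w ≠ 0) :
    iteratedFDeriv ℝ 2 (fun v ↦ ∫ z, powerProfile a (diagEval z v) ∂μ) u ![w, w] < 0 :=
  iteratedFDeriv_two_integral_comp_neg (continuous_diagEval.comp continuous_subtype_val) isOpen_Ioi
    (fun _ ↦ hasDerivAt_powerProfile ha) (fun _ ↦ hasDerivAt_rpow_neg_sub_one)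
    continuousOn_mul_rpow_neg_sub_two
    (fun _ ht ↦ mul_neg_of_neg_of_pos (by linarith) (Real.rpow_pos_of_pos ht _))
    (fun z ↦ diagEval_pos (ne_zero_of_mem_unit_sphere z) hu) (exists_diagEval_ne_zero hw)

lemma strictConcaveOn_integral_powerProfile (ha : a ≠ 0) (ha' : -1 < a) :
    StrictConcaveOn ℝ {u : EuclideanSpace ℝ ι | ∀ i, 0 < u i}
      fun v ↦ ∫ z, powerProfile a (diagEval z v) ∂μ :=
  (strictConcaveOn_integral_comp (continuous_diagEval.comp continuous_subtype_val)
    (fun _ ↦ exists_diagEval_ne_zero) (strictConcaveOn_powerProfile ha ha')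
    (continuousOn_powerProfile ha)).subset
    (fun _ hu z ↦ diagEval_pos (ne_zero_of_mem_unit_sphere z) hu) convex_positiveOrthant

end SphereIntegral

lemma Xi_eq_integral_powerProfile {d : ℕ} (hd : 1 ≤ d) :
    Xi d = fun u ↦ ∫ z, powerProfile (((d : ℝ) - 1) / 2) (diagEval z u) ∂sphereProb d := by
  funext u
  rw [Xi, integral_sphereUniform hd, ← integral_const_mul]
  simp only [powerProfile, diagEval_apply, inv_div, neg_div, neg_mul]

/-- the Hessian quadratic form of `Ξ` at any `u ∈ ℝ_{>0}^d` and unit vector `w`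
equals `-((d+1)/2) ∫ (Σ w_i z_i²)² (Σ u_k z_k²)^{-(d+3)/2} dη` and is negative; in particular
`Ξ` is strictly concave on `ℝ_{>0}^d`. -/
theorem hessian_Xi_neg (d : ℕ) (hd : 2 ≤ d) :
    (∀ u : EuclideanSpace ℝ (Fin d), (∀ i, 0 < u i) →
      ∀ w : EuclideanSpace ℝ (Fin d), ‖w‖ = 1 →
        (iteratedFDeriv ℝ 2 (Xi d) u ![w, w] =
          -(((d : ℝ) + 1) / 2) *
            ∫ z, (∑ i, w i * z i ^ 2) ^ 2 * (∑ k, u k * z k ^ 2) ^ (-((d : ℝ) + 3) / 2)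
              ∂(sphereUniform d) ∧
         iteratedFDeriv ℝ 2 (Xi d) u ![w, w] < 0)) ∧
    StrictConcaveOn ℝ {u : EuclideanSpace ℝ (Fin d) | ∀ i, 0 < u i} (Xi d) := by
  have ha : 0 < ((d : ℝ) - 1) / 2 := half_pos (sub_pos.2 (by exact_mod_cast hd))
  have hconst : -(((d : ℝ) - 1) / 2 + 1) = -(((d : ℝ) + 1) / 2) := by ring
  have hexponent : -(((d : ℝ) - 1) / 2) - 2 = -((d : ℝ) + 3) / 2 := by ring
  rw [Xi_eq_integral_powerProfile (by lia)]
  refine ⟨fun u hu w hw ↦ ⟨?_, ?_⟩, strictConcaveOn_integral_powerProfile ha.ne' (by linarith)⟩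
  · rw [iteratedFDeriv_two_integral_powerProfile ha.ne' hu, integral_sphereUniform (by lia)]
    simp only [diagEval_apply, hconst, hexponent]
  · exact iteratedFDeriv_two_integral_powerProfile_neg ha.ne' (by linarith) hu
      (norm_ne_zero_iff.1 (hw ▸ one_ne_zero))
end

section
/- Let Λ be a symmetric positive definite d×d matrix and let p(x) = c · ‖x‖ · (2π)^{-d/2} (det Λ)^{-1/2} exp(-½ xᵀΛ^{-1}x) be a probability density on ℝ^d (with c the appropriate normalizing constant). Then the push-forward of p under the map x ↦ x/‖x‖ is absolutely continuous with respect to the uniform probability measure η on S^{d-1}, with density proportional to ζ ↦ (ζᵀΛ^{-1}ζ)^{-(d+1)/2}. -/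
open MeasureTheory Matrix Real

/-!
In polar coordinates `x = rζ`, the image of `f(x) dx` under `x ↦ x/‖x‖` has density
`ζ ↦ ∫₀^∞ r^{n-1} f(rζ) dr` with respect to the surface measure `σ`. For
`f(x) = a ‖x‖^k exp(-b q(x))` with `q` positively homogeneous of degree `β`, this is a Gamma
integral, equal to a constant times `q(ζ)^{-(n+k)/β}`.

It remains to compare `σ`, which is defined through the volume of cones, with the Hausdorff measure
in `sphereUniform`. Reflections act transitively on the sphere and preserve both measures, so for
both of them the measure of a ball depends only on its radius; by Christensen's theorem they are
then proportional.
-/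

open Metric Filter Topology Set Module
open scoped Pointwise

section Christensen

variable {X : Type*} [PseudoMetricSpace X]

theorem preimage_prodMk_left_setOf_dist_lt (r : ℝ) (x : X) :
    Prod.mk x ⁻¹' {z : X × X | dist z.1 z.2 < r} = ball x r := by
  ext y
  exact mem_ball'.symm

variable [MeasurableSpace X]

/-- A *uniformly distributed* measure (in the sense of Christensen and Mattila): the measure of a
ball depends only on its radius. It is neither assumed to be finite nor to be nonzero. -/
def IsUniformlyDistributed (μ : Measure X) : Prop :=
  ∀ r x y, μ (ball x r) = μ (ball y r)

theorem isUniformlyDistributed_of_isometryEquiv [OpensMeasurableSpace X] {μ : Measure X}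
    (h : ∀ x y, ∃ e : X ≃ᵢ X, e x = y ∧ MeasurePreserving e μ μ) :
    IsUniformlyDistributed μ := by
  intro r x y
  obtain ⟨e, rfl, he⟩ := h x y
  rw [← he.measure_preimage (s := ball (e x) r) measurableSet_ball.nullMeasurableSet,
    e.isometry.preimage_ball]

theorem IsUniformlyDistributed.measure_ball_ne_zero [SecondCountableTopology X] {μ : Measure X}
    (hμ : IsUniformlyDistributed μ) (hμ0 : μ ≠ 0) {r : ℝ} (hr : 0 < r) (x : X) :
    μ (ball x r) ≠ 0 := by
  intro h
  refine hμ0 (Measure.measure_univ_eq_zero.1 (measure_null_of_locally_null _ fun y _ => ?_))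
  exact ⟨ball y r, mem_nhdsWithin_of_mem_nhds (ball_mem_nhds y hr), (hμ r y x).trans h⟩

theorem IsUniformlyDistributed.tendsto_measure_restrict_ball_div [SecondCountableTopology X]
    {ν : Measure X} [IsFiniteMeasure ν] (hν : IsUniformlyDistributed ν) (hν0 : ν ≠ 0)
    {U : Set X} (hU : IsOpen U) {x : X} (hx : x ∈ U) (x₀ : X) :
    Tendsto (fun r => ν.restrict U (ball x r) / ν (ball x₀ r)) (𝓝[>] 0) (𝓝 1) := by
  obtain ⟨ε, hε, hεU⟩ := Metric.isOpen_iff.1 hU x hx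
  refine tendsto_const_nhds.congr' ?_
  filter_upwards [Ioo_mem_nhdsGT hε] with r hr
  rw [Measure.restrict_eq_self _ ((ball_subset_ball hr.2.le).trans hεU), hν r x x₀,
    ENNReal.div_self (hν.measure_ball_ne_zero hν0 hr.1 x₀) (measure_ne_top _ _)]

variable [OpensMeasurableSpace X] [SecondCountableTopology X]

theorem measurableSet_setOf_dist_lt (r : ℝ) : MeasurableSet {z : X × X | dist z.1 z.2 < r} :=
  (isOpen_lt continuous_dist continuous_const).measurableSet

theorem measurable_measure_ball (μ : Measure X) [SFinite μ] (r : ℝ) :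
    Measurable fun x => μ (ball x r) := by
  simpa only [preimage_prodMk_left_setOf_dist_lt] using
    measurable_measure_prodMk_left (ν := μ) (measurableSet_setOf_dist_lt r)

theorem lintegral_measure_ball_comm (μ ν : Measure X) [SFinite μ] [SFinite ν] (r : ℝ) :
    ∫⁻ x, ν (ball x r) ∂μ = ∫⁻ y, μ (ball y r) ∂ν := by
  have hμν := Measure.prod_apply (μ := μ) (ν := ν) (measurableSet_setOf_dist_lt r)
  rw [Measure.prod_apply_symm (measurableSet_setOf_dist_lt r)] at hμν
  simp only [preimage_prodMk_left_setOf_dist_lt] at hμν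
  exact hμν.symm

namespace IsUniformlyDistributed

variable {μ ν : Measure X} [IsFiniteMeasure μ] [IsFiniteMeasure ν]

theorem setLIntegral_measure_restrict_ball_le (hμ : IsUniformlyDistributed μ) (U : Set X)
    (r : ℝ) (x₀ : X) : ∫⁻ x in U, ν.restrict U (ball x r) ∂μ ≤ μ (ball x₀ r) * ν U :=
  calc ∫⁻ x in U, ν.restrict U (ball x r) ∂μ
      = ∫⁻ y in U, μ.restrict U (ball y r) ∂ν := lintegral_measure_ball_comm _ _ r
    _ ≤ ∫⁻ _ in U, μ (ball x₀ r) ∂ν :=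
        lintegral_mono fun y => (Measure.restrict_apply_le _ _).trans (hμ r y x₀).le
    _ = μ (ball x₀ r) * ν U := setLIntegral_const _ _

-- Fatou's lemma applied to `ν (U ∩ ball x (r n)) / ν (ball x₀ (r n))`, which tends to `1` on `U`.
theorem measure_le_mul_of_tendsto (hμ : IsUniformlyDistributed μ) (hν : IsUniformlyDistributed ν)
    (hν0 : ν ≠ 0) {r : ℕ → ℝ} (hr : Tendsto r atTop (𝓝[>] 0)) {x₀ : X}
    {K : ENNReal} (hK : Tendsto (fun n => μ (ball x₀ (r n)) / ν (ball x₀ (r n))) atTop (𝓝 K))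
    {U : Set X} (hU : IsOpen U) : μ U ≤ K * ν U := by
  have hlim : ∀ x ∈ U,
      liminf (fun n => ν.restrict U (ball x (r n)) / ν (ball x₀ (r n))) atTop = 1 := fun x hx =>
    ((hν.tendsto_measure_restrict_ball_div hν0 hU hx x₀).comp hr).liminf_eq
  calc μ U = ∫⁻ x in U,
          liminf (fun n => ν.restrict U (ball x (r n)) / ν (ball x₀ (r n))) atTop ∂μ := by
        rw [setLIntegral_congr_fun hU.measurableSet hlim, setLIntegral_one]
    _ ≤ liminf (fun n =>
          ∫⁻ x in U, ν.restrict U (ball x (r n)) / ν (ball x₀ (r n)) ∂μ) atTop :=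
        lintegral_liminf_le fun n => (measurable_measure_ball _ _).div_const _
    _ ≤ liminf (fun n => μ (ball x₀ (r n)) / ν (ball x₀ (r n)) * ν U) atTop := by
        refine liminf_le_liminf ?_
        filter_upwards [hr.eventually self_mem_nhdsWithin] with n hrn
        have hinv : (ν (ball x₀ (r n)))⁻¹ ≠ ⊤ :=
          ENNReal.inv_ne_top.2 (hν.measure_ball_ne_zero hν0 hrn x₀)
        simp only [div_eq_mul_inv]
        rw [lintegral_mul_const' _ _ hinv, mul_right_comm]
        gcongr
        exact hμ.setLIntegral_measure_restrict_ball_le U (r n) x₀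
    _ = K * ν U := (ENNReal.Tendsto.mul_const hK (Or.inr (measure_ne_top _ _))).liminf_eq

theorem measure_univ_mul_le (hμ : IsUniformlyDistributed μ) (hν : IsUniformlyDistributed ν)
    {U : Set X} (hU : IsOpen U) : ν univ * μ U ≤ μ univ * ν U := by
  rcases eq_or_ne μ 0 with rfl | hμ0
  · simp
  rcases eq_or_ne ν 0 with rfl | hν0
  · simp
  obtain ⟨x₀⟩ : Nonempty X := have := NeZero.mk hμ0; μ.nonempty_of_neZero
  obtain ⟨K, φ, hφ, hK⟩ := CompactSpace.tendsto_subseq (X := ENNReal)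
    fun n : ℕ => μ (ball x₀ (1 / ((n : ℝ) + 1))) / ν (ball x₀ (1 / ((n : ℝ) + 1)))
  set r : ℕ → ℝ := fun n => 1 / ((φ n : ℝ) + 1)
  have hr0 : ∀ n, 0 < r n := fun n => Nat.one_div_pos_of_nat
  have hr : Tendsto r atTop (𝓝[>] 0) := tendsto_nhdsWithin_iff.2
    ⟨tendsto_one_div_add_atTop_nhds_zero_nat.comp hφ.tendsto_atTop, Eventually.of_forall hr0⟩
  have hK_inv : Tendsto (fun n => ν (ball x₀ (r n)) / μ (ball x₀ (r n))) atTop (𝓝 K⁻¹) :=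
    hK.inv.congr fun n => ENNReal.inv_div (Or.inl (measure_ne_top _ _))
      (Or.inl (hν.measure_ball_ne_zero hν0 (hr0 n) x₀))
  calc ν univ * μ U ≤ K⁻¹ * μ univ * (K * ν U) := by
        gcongr
        · exact hν.measure_le_mul_of_tendsto hμ hμ0 hr hK_inv isOpen_univ
        · exact hμ.measure_le_mul_of_tendsto hν hν0 hr hK hU
    _ = K⁻¹ * K * (μ univ * ν U) := by ring
    _ ≤ 1 * (μ univ * ν U) := by
        gcongr
        exact ENNReal.inv_mul_le_one K
    _ = μ univ * ν U := one_mul _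

/-- **Christensen's theorem**. -/
theorem measure_univ_smul_comm [BorelSpace X] (hμ : IsUniformlyDistributed μ)
    (hν : IsUniformlyDistributed ν) :
    ν univ • μ = μ univ • ν := by
  have hfin : IsFiniteMeasure (ν univ • μ) := μ.smul_finite (measure_ne_top ν univ)
  exact ext_of_generate_finite _ BorelSpace.measurable_eq isPiSystem_isOpen
    (fun U hU => le_antisymm (hμ.measure_univ_mul_le hν hU) (hν.measure_univ_mul_le hμ hU))
    (mul_comm _ _)

end IsUniformlyDistributed

end Christensen

section Sphere

variable {E : Type*} [NormedAddCommGroup E] [InnerProductSpace ℝ E]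

/-- The isometry of the unit sphere induced by a linear isometry of the ambient space. -/
def sphereIsometryEquiv (e : E ≃ₗᵢ[ℝ] E) : sphere (0 : E) 1 ≃ᵢ sphere (0 : E) 1 where
  toFun x := ⟨e x, by simp⟩
  invFun x := ⟨e.symm x, by simp⟩
  left_inv x := by simp
  right_inv x := by simp
  isometry_toFun x y := by simp [Subtype.edist_eq]

theorem exists_sphereIsometryEquiv_apply_eq (x y : sphere (0 : E) 1) :
    ∃ e : E ≃ₗᵢ[ℝ] E, sphereIsometryEquiv e x = y :=
  ⟨(ℝ ∙ ((x : E) - y))ᗮ.reflection, Subtype.ext (Submodule.reflection_sub (by simp))⟩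

theorem ball_subset_orthogonalProjectionOnto_image_sphere {v : E} (hv : ‖v‖ = 1) :
    ball (0 : (ℝ ∙ v)ᗮ) 1 ⊆ (ℝ ∙ v)ᗮ.orthogonalProjectionOnto '' sphere (0 : E) 1 := by
  intro w hw
  have hw1 : ‖(w : E)‖ < 1 := by simpa using hw
  have hwv : inner ℝ (w : E) v = 0 := Submodule.mem_orthogonal_singleton_iff_inner_left.1 w.2
  have hs : 0 ≤ 1 - ‖(w : E)‖ ^ 2 := by nlinarith [norm_nonneg (w : E)]
  refine ⟨w + √(1 - ‖(w : E)‖ ^ 2) • v, ?_, ?_⟩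
  · rw [mem_sphere_zero_iff_norm, ← sq_eq_sq₀ (norm_nonneg _) zero_le_one, norm_add_sq_real,
      inner_smul_right, hwv, norm_smul, hv, mul_one, Real.norm_eq_abs, sq_abs, Real.sq_sqrt hs]
    ring
  · rw [map_add, map_smul,
      Submodule.orthogonalProjectionOnto_orthogonalComplement_singleton_eq_zero]
    simp

theorem natCast_finrank_orthogonal_span_singleton [FiniteDimensional ℝ E] {v : E} (hv : v ≠ 0) :
    (finrank ℝ (ℝ ∙ v)ᗮ : ℝ) = finrank ℝ E - 1 := by
  have h := Submodule.finrank_add_finrank_orthogonal (ℝ ∙ v)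
  rw [finrank_span_singleton hv] at h
  rw [← h]
  push_cast
  ring

variable [MeasurableSpace E] [BorelSpace E]

theorem isUniformlyDistributed_hausdorffMeasure_sphere (s : ℝ) :
    IsUniformlyDistributed (μH[s] : Measure (sphere (0 : E) 1)) :=
  isUniformlyDistributed_of_isometryEquiv fun x y =>
    let ⟨e, he⟩ := exists_sphereIsometryEquiv_apply_eq x y
    ⟨sphereIsometryEquiv e, he, (sphereIsometryEquiv e).measurePreserving_hausdorffMeasure s⟩

variable [FiniteDimensional ℝ E]

theorem measurePreserving_sphereIsometryEquiv_toSphere (e : E ≃ₗᵢ[ℝ] E) :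
    MeasurePreserving (sphereIsometryEquiv e) (volume : Measure E).toSphere
      (volume : Measure E).toSphere := by
  have hmeas : Measurable (sphereIsometryEquiv e) := (sphereIsometryEquiv e).continuous.measurable
  refine ⟨hmeas, Measure.ext fun s hs => ?_⟩
  have hcone : Ioo (0 : ℝ) 1 • ((↑) '' (sphereIsometryEquiv e ⁻¹' s) : Set E) =
      e ⁻¹' (Ioo (0 : ℝ) 1 • ((↑) '' s : Set E)) := by
    have himage : ((↑) '' (sphereIsometryEquiv e ⁻¹' s) : Set E) = e.symm '' ((↑) '' s) := by
      rw [← IsometryEquiv.image_symm, image_image, image_image]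
      rfl
    calc Ioo (0 : ℝ) 1 • ((↑) '' (sphereIsometryEquiv e ⁻¹' s) : Set E)
        = Ioo (0 : ℝ) 1 • (e.symm '' ((↑) '' s) : Set E) := by rw [himage]
      _ = e.symm '' (Ioo (0 : ℝ) 1 • ((↑) '' s : Set E)) :=
          (image_image2_distrib_right fun a x => map_smul e.symm a x).symm
      _ = e ⁻¹' (Ioo (0 : ℝ) 1 • ((↑) '' s : Set E)) :=
          congrFun (image_eq_preimage_of_inverse e.apply_symm_apply e.symm_apply_apply) _
  rw [Measure.map_apply hmeas hs, Measure.toSphere_apply' _ (hmeas hs),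
    Measure.toSphere_apply' _ hs, hcone,
    e.measurePreserving.measure_preimage_emb e.toHomeomorph.measurableEmbedding]

theorem isUniformlyDistributed_toSphere :
    IsUniformlyDistributed (volume : Measure E).toSphere :=
  isUniformlyDistributed_of_isometryEquiv fun x y =>
    let ⟨e, he⟩ := exists_sphereIsometryEquiv_apply_eq x y
    ⟨sphereIsometryEquiv e, he, measurePreserving_sphereIsometryEquiv_toSphere e⟩

-- Inverse stereographic projection is smooth, hence locally Lipschitz, on a space of dimension
-- `finrank ℝ E - 1`; compactness of the sphere turns this into a global bound.
theorem hausdorffMeasure_univ_sphere_lt_top :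
    μH[(finrank ℝ E : ℝ) - 1] (univ : Set (sphere (0 : E) 1)) < ⊤ := by
  refine isCompact_univ.measure_lt_top_of_nhdsWithin fun x _ => ?_
  have hv : ‖(-x : E)‖ = 1 := by simp
  have hx0 : (x : E) ≠ 0 := ne_zero_of_mem_unit_sphere x
  rw [nhdsWithin_univ, ← natCast_finrank_orthogonal_span_singleton (neg_ne_zero.2 hx0)]
  have hC : ContDiff ℝ 1 (stereoInvFunAux (-x : E) ∘ ((↑) : (ℝ ∙ (-x : E))ᗮ → E)) :=
    contDiff_stereoInvFunAux.comp (ℝ ∙ (-x : E))ᗮ.subtypeL.contDiff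
  obtain ⟨K, t, ht, hLip⟩ := (hC.contDiffAt (x := 0)).exists_lipschitzOnWith
  obtain ⟨ε, hε, hεt⟩ := nhds_basis_closedBall.mem_iff.1 ht
  have hLip_ball : LipschitzOnWith K (stereographic hv).symm (closedBall 0 ε) :=
    fun a ha b hb => hLip (hεt ha) (hεt hb)
  refine ⟨(stereographic hv).symm '' closedBall 0 ε, ?_, ?_⟩
  · have h0 : (stereographic hv).symm 0 = x := by
      ext1
      change stereoInvFunAux (-x : E) _ = _
      simp
    simpa only [h0] using (isOpenEmbedding_stereographic_symm hv).isOpenMap.image_mem_nhds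
      (closedBall_mem_nhds 0 hε)
  · refine (hLip_ball.hausdorffMeasure_image_le (by positivity)).trans_lt ?_
    exact ENNReal.mul_lt_top (by simp) (isCompact_closedBall _ _).measure_lt_top

theorem hausdorffMeasure_sphere_ne_zero [Nontrivial E] :
    μH[(finrank ℝ E : ℝ) - 1] (sphere (0 : E) 1) ≠ 0 := by
  obtain ⟨v, hv⟩ := exists_norm_eq E zero_le_one
  rw [← natCast_finrank_orthogonal_span_singleton (norm_ne_zero_iff.1 (hv.trans_ne one_ne_zero))]
  have hpos : 0 < μH[(finrank ℝ (ℝ ∙ v)ᗮ : ℝ)] (ball (0 : (ℝ ∙ v)ᗮ) 1) :=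
    measure_ball_pos _ _ one_pos
  have hle := measure_mono (μ := μH[(finrank ℝ (ℝ ∙ v)ᗮ : ℝ)])
    (ball_subset_orthogonalProjectionOnto_image_sphere hv)
  exact (hpos.trans_le (hle.trans
    (hausdorffMeasure_orthogonalProjectionOnto_le _ _ _ (Nat.cast_nonneg _)))).ne'

theorem map_coe_hausdorffMeasure_sphere [Nontrivial E] :
    (μH[(finrank ℝ E : ℝ) - 1] : Measure (sphere (0 : E) 1)).map (↑) =
      (μH[(finrank ℝ E : ℝ) - 1]).restrict (sphere (0 : E) 1) := by
  have hn : (0 : ℝ) ≤ (finrank ℝ E : ℝ) - 1 :=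
    sub_nonneg.2 (Nat.one_le_cast.2 (finrank_pos (R := ℝ) (M := E)))
  rw [isometry_subtype_coe.map_hausdorffMeasure (Or.inl hn), Subtype.range_coe]

theorem hausdorffMeasure_univ_sphere [Nontrivial E] :
    μH[(finrank ℝ E : ℝ) - 1] (univ : Set (sphere (0 : E) 1)) =
      μH[(finrank ℝ E : ℝ) - 1] (sphere (0 : E) 1) := by
  rw [← Measure.restrict_apply_univ (sphere (0 : E) 1), ← map_coe_hausdorffMeasure_sphere,
    Measure.map_apply measurable_subtype_coe .univ, preimage_univ]

theorem hausdorffMeasure_smul_map_coe_toSphere [Nontrivial E] :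
    μH[(finrank ℝ E : ℝ) - 1] (sphere (0 : E) 1) • (volume : Measure E).toSphere.map (↑) =
      (volume : Measure E).toSphere univ •
        (μH[(finrank ℝ E : ℝ) - 1]).restrict (sphere (0 : E) 1) := by
  have hfin : IsFiniteMeasure (μH[(finrank ℝ E : ℝ) - 1] : Measure (sphere (0 : E) 1)) :=
    ⟨hausdorffMeasure_univ_sphere_lt_top⟩
  rw [← hausdorffMeasure_univ_sphere, ← Measure.map_smul,
    isUniformlyDistributed_toSphere.measure_univ_smul_comm
      (isUniformlyDistributed_hausdorffMeasure_sphere _),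
    Measure.map_smul, map_coe_hausdorffMeasure_sphere]

end Sphere

section PolarCoordinates

variable {E : Type*} [NormedAddCommGroup E] [NormedSpace ℝ E] [FiniteDimensional ℝ E]
  [Nontrivial E] [MeasurableSpace E] [BorelSpace E] (μ : Measure E) [μ.IsAddHaarMeasure]

theorem lintegral_eq_lintegral_toSphere {f : E → ENNReal} (hf : Measurable f) :
    ∫⁻ x, f x ∂μ = ∫⁻ ζ, ∫⁻ r in Ioi (0 : ℝ),
      ENNReal.ofReal (r ^ (finrank ℝ E - 1)) * f (r • (ζ : E)) ∂volume ∂μ.toSphere := by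
  have hsymm := μ.measurePreserving_homeomorphUnitSphereProd.symm
    (homeomorphUnitSphereProd E).toMeasurableEquiv
  have hf_symm : Measurable fun z => f ((homeomorphUnitSphereProd E).symm z) :=
    hf.comp (measurable_subtype_coe.comp (homeomorphUnitSphereProd E).symm.measurable)
  calc ∫⁻ x, f x ∂μ
      = ∫⁻ x in ({0}ᶜ : Set E), f x ∂μ := by rw [restrict_compl_singleton]
    _ = ∫⁻ x : ({0}ᶜ : Set E), f x ∂(μ.comap Subtype.val) :=
        (lintegral_subtype_comap (measurableSet_singleton _).compl f).symm
    _ = ∫⁻ z, f ((homeomorphUnitSphereProd E).symm z)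
          ∂(μ.toSphere.prod (Measure.volumeIoiPow (finrank ℝ E - 1))) :=
        (hsymm.lintegral_comp (hf.comp measurable_subtype_coe)).symm
    _ = ∫⁻ ζ, ∫⁻ r : Ioi (0 : ℝ), f (r.1 • (ζ : E))
          ∂(Measure.volumeIoiPow (finrank ℝ E - 1)) ∂μ.toSphere := by
        rw [lintegral_prod _ hf_symm.aemeasurable]
        simp only [homeomorphUnitSphereProd_symm_apply_coe]
    _ = ∫⁻ ζ, ∫⁻ r in Ioi (0 : ℝ),
          ENNReal.ofReal (r ^ (finrank ℝ E - 1)) * f (r • (ζ : E)) ∂volume ∂μ.toSphere := by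
        refine lintegral_congr fun ζ => ?_
        rw [Measure.volumeIoiPow, lintegral_withDensity_eq_lintegral_mul _ (by fun_prop)
          (by fun_prop), ← lintegral_subtype_comap measurableSet_Ioi]
        rfl

theorem map_normalize_withDensity {f : E → ENNReal} (hf : Measurable f) :
    (μ.withDensity f).map NormedSpace.normalize =
      (μ.toSphere.withDensity fun ζ => ∫⁻ r in Ioi (0 : ℝ),
        ENNReal.ofReal (r ^ (finrank ℝ E - 1)) * f (r • (ζ : E))).map (↑) := by
  have hnorm : Measurable (NormedSpace.normalize : E → E) := by
    unfold NormedSpace.normalize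
    fun_prop
  refine Measure.ext_of_lintegral _ fun g hg => ?_
  rw [lintegral_map hg hnorm, lintegral_map hg measurable_subtype_coe,
    lintegral_withDensity_eq_lintegral_mul _ hf (by fun_prop),
    lintegral_withDensity_eq_lintegral_mul _ (by fun_prop) (by fun_prop),
    lintegral_eq_lintegral_toSphere μ (by fun_prop)]
  refine lintegral_congr fun ζ => ?_
  rw [Pi.mul_apply, ← lintegral_mul_const _ (by fun_prop)]
  refine setLIntegral_congr_fun measurableSet_Ioi fun r (hr : 0 < r) => ?_
  have hrζ : NormedSpace.normalize (r • (ζ : E)) = ζ := by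
    rw [NormedSpace.normalize_smul_of_pos hr,
      NormedSpace.normalize_eq_self_of_norm_eq_one (norm_eq_of_mem_sphere ζ)]
  simp only [Pi.mul_apply, hrζ, mul_assoc]

end PolarCoordinates

theorem lintegral_rpow_mul_exp_neg_mul_rpow {p s b : ℝ} (hp : 0 < p) (hs : -1 < s) (hb : 0 < b) :
    ∫⁻ r in Ioi (0 : ℝ), ENNReal.ofReal (r ^ s * exp (-b * r ^ p)) =
      ENNReal.ofReal (b ^ (-(s + 1) / p) * (1 / p) * Gamma ((s + 1) / p)) := by
  rw [← integral_rpow_mul_exp_neg_mul_rpow hp hs hb,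
    ofReal_integral_eq_lintegral_ofReal (integrableOn_rpow_mul_exp_neg_mul_rpow hs hp hb)]
  filter_upwards [ae_restrict_mem measurableSet_Ioi] with r (hr : 0 < r)
  positivity

theorem lintegral_radial_rpow_mul_exp_neg {n : ℕ} (hn : 0 < n) {k a b t β : ℝ}
    (hk : -(n : ℝ) < k) (ha : 0 ≤ a) (hb : 0 < b) (ht : 0 < t) (hβ : 0 < β) :
    ∫⁻ r in Ioi (0 : ℝ), ENNReal.ofReal (r ^ (n - 1)) *
        ENNReal.ofReal (a * r ^ k * exp (-b * (r ^ β * t))) =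
      ENNReal.ofReal (a * (b ^ (-(n + k) / β) * (1 / β) * Gamma ((n + k) / β)) *
        t ^ (-(n + k) / β)) := by
  have hs : (n + k - 1) + 1 = n + k := sub_add_cancel _ _
  calc ∫⁻ r in Ioi (0 : ℝ), ENNReal.ofReal (r ^ (n - 1)) *
        ENNReal.ofReal (a * r ^ k * exp (-b * (r ^ β * t)))
      = ∫⁻ r in Ioi (0 : ℝ), ENNReal.ofReal a *
          ENNReal.ofReal (r ^ (n + k - 1) * exp (-(b * t) * r ^ β)) := by
        refine setLIntegral_congr_fun measurableSet_Ioi fun r (hr : 0 < r) => ?_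
        have hpow : r ^ (n + k - 1) = r ^ (n - 1) * r ^ k := by
          rw [← rpow_natCast, ← rpow_add hr, Nat.cast_pred hn]
          ring_nf
        rw [← ENNReal.ofReal_mul (by positivity), ← ENNReal.ofReal_mul ha, hpow]
        ring_nf
    _ = ENNReal.ofReal a * ENNReal.ofReal
          ((b * t) ^ (-(n + k) / β) * (1 / β) * Gamma ((n + k) / β)) := by
        rw [lintegral_const_mul' _ _ ENNReal.ofReal_ne_top,
          lintegral_rpow_mul_exp_neg_mul_rpow hβ (by linarith) (mul_pos hb ht), hs]
    _ = ENNReal.ofReal (a * (b ^ (-(n + k) / β) * (1 / β) * Gamma ((n + k) / β)) *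
          t ^ (-(n + k) / β)) := by
        rw [← ENNReal.ofReal_mul ha, mul_rpow hb.le ht.le]
        ring_nf

theorem map_withDensity_comp {α β : Type*} [MeasurableSpace α] [MeasurableSpace β] (μ : Measure α)
    {f : α → β} {g : β → ENNReal} (hf : Measurable f) (hg : Measurable g) :
    (μ.withDensity fun x => g (f x)).map f = (μ.map f).withDensity g := by
  ext s hs
  rw [Measure.map_apply hf hs, withDensity_apply _ (hf hs), withDensity_apply _ hs,
    setLIntegral_map hs hg hf]

theorem map_coe_toSphere_eq_smul_sphereUniform {d : ℕ} (hd : 0 < d) :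
    (volume : Measure (EuclideanSpace ℝ (Fin d))).toSphere.map (↑) =
      (volume : Measure (EuclideanSpace ℝ (Fin d))).toSphere univ • sphereUniform d := by
  have : Nonempty (Fin d) := ⟨⟨0, hd⟩⟩
  have hσ := hausdorffMeasure_smul_map_coe_toSphere (E := EuclideanSpace ℝ (Fin d))
  have hm0 := hausdorffMeasure_sphere_ne_zero (E := EuclideanSpace ℝ (Fin d))
  have hm_top := hausdorffMeasure_univ_sphere_lt_top (E := EuclideanSpace ℝ (Fin d))
  rw [hausdorffMeasure_univ_sphere] at hm_top
  rw [finrank_euclideanSpace_fin] at hσ hm0 hm_top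
  rw [sphereUniform, smul_comm, ← hσ, smul_smul, ENNReal.inv_mul_cancel hm0 hm_top.ne, one_smul]

theorem pushforward_normalized_density_general {d : ℕ} (hd : 0 < d)
    {q : EuclideanSpace ℝ (Fin d) → ℝ} (hq : Measurable q) {β : ℝ} (hβ : 0 < β)
    (hq_smul : ∀ r, 0 < r → ∀ x, q (r • x) = r ^ β * q x) (hq_pos : ∀ x, x ≠ 0 → 0 < q x)
    {k a b : ℝ} (hk : -(d : ℝ) < k) (ha : 0 < a) (hb : 0 < b)
    {p : EuclideanSpace ℝ (Fin d) → ℝ} (hp : ∀ x, p x = a * ‖x‖ ^ k * exp (-b * q x)) :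
    ∃ C : ℝ, 0 < C ∧
      (volume.withDensity fun x => ENNReal.ofReal (p x)).map NormedSpace.normalize =
        (sphereUniform d).withDensity fun ζ => ENNReal.ofReal (C * q ζ ^ (-(d + k) / β)) := by
  have : Nonempty (Fin d) := ⟨⟨0, hd⟩⟩
  set σ := (volume : Measure (EuclideanSpace ℝ (Fin d))).toSphere
  set B : ℝ := a * (b ^ (-(d + k) / β) * (1 / β) * Gamma ((d + k) / β))
  have hΓ : 0 < Gamma ((d + k) / β) := Gamma_pos_of_pos (div_pos (by linarith) hβ)
  have hσ : 0 < σ.real univ := ENNReal.toReal_pos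
    (Measure.measure_univ_ne_zero.2 (Measure.toSphere_ne_zero _)) (measure_ne_top _ _)
  have hp_meas : Measurable fun x => ENNReal.ofReal (p x) := by
    rw [funext hp]
    fun_prop
  have hradial : ∀ ζ : sphere (0 : EuclideanSpace ℝ (Fin d)) 1,
      ∫⁻ r in Ioi (0 : ℝ), ENNReal.ofReal
          (r ^ (finrank ℝ (EuclideanSpace ℝ (Fin d)) - 1)) * ENNReal.ofReal (p (r • ζ)) =
        ENNReal.ofReal (B * q ζ ^ (-(d + k) / β)) := fun ζ => by
    rw [← lintegral_radial_rpow_mul_exp_neg hd hk ha.le hb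
      (hq_pos ζ (ne_zero_of_mem_unit_sphere ζ)) hβ, finrank_euclideanSpace_fin]
    refine setLIntegral_congr_fun measurableSet_Ioi fun r (hr : 0 < r) => ?_
    simp only [hp, hq_smul r hr, norm_smul, norm_eq_of_mem_sphere, mul_one, norm_of_nonneg hr.le]
  refine ⟨σ.real univ * B, by positivity, ?_⟩
  calc (volume.withDensity fun x => ENNReal.ofReal (p x)).map NormedSpace.normalize
      = (σ.withDensity fun ζ => ENNReal.ofReal (B * q ζ ^ (-(d + k) / β))).map (↑) := by
        rw [map_normalize_withDensity _ hp_meas, funext hradial]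
    _ = (σ univ • sphereUniform d).withDensity
          fun ζ => ENNReal.ofReal (B * q ζ ^ (-(d + k) / β)) := by
        rw [← map_coe_toSphere_eq_smul_sphereUniform hd]
        exact map_withDensity_comp (g := fun ζ => ENNReal.ofReal (B * q ζ ^ (-(d + k) / β))) σ
          measurable_subtype_coe (by fun_prop)
    _ = (sphereUniform d).withDensity
          fun ζ => ENNReal.ofReal (σ.real univ * B * q ζ ^ (-(d + k) / β)) := by
        rw [withDensity_smul_measure, ← withDensity_smul' _ _ (measure_ne_top σ univ)]
        refine congrArg _ (funext fun ζ => ?_)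
        rw [mul_assoc, ENNReal.ofReal_mul hσ.le, ofReal_measureReal, Pi.smul_apply, smul_eq_mul]

section QuadraticForm

variable {ι : Type*} [Fintype ι]

theorem dotProduct_mulVec_smul_self {R : Type*} [CommSemiring R] (M : Matrix ι ι R) (r : R)
    (v : ι → R) : (r • v) ⬝ᵥ (M *ᵥ (r • v)) = r ^ 2 * (v ⬝ᵥ (M *ᵥ v)) := by
  rw [mulVec_smul, dotProduct_smul, smul_dotProduct, smul_smul, smul_eq_mul, sq]

theorem continuous_dotProduct_mulVec_self {R : Type*} [NonUnitalNonAssocSemiring R]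
    [TopologicalSpace R] [ContinuousAdd R] [ContinuousMul R] (M : Matrix ι ι R) :
    Continuous fun v : ι → R => v ⬝ᵥ (M *ᵥ v) :=
  continuous_id.dotProduct (continuous_const.matrix_mulVec continuous_id)

end QuadraticForm

/-- the push-forward under `x ↦ x/‖x‖` of the probability measure with
density `p(x) = c ‖x‖ (2π)^{-d/2} (det Λ)^{-1/2} exp(-½ xᵀΛ^{-1}x)` (w.r.t. Lebesgue
measure on `ℝ^d`) is absolutely continuous w.r.t. the uniform probability measure `η` on
`S^{d-1}` with density proportional to `ζ ↦ (ζᵀΛ^{-1}ζ)^{-(d+1)/2}`. -/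
theorem pushforward_normalized_density (d : ℕ) (hd : 2 ≤ d)
    (Λ : Matrix (Fin d) (Fin d) ℝ) (hΛ : Λ.PosDef) (c : ℝ) (hc : 0 < c)
    (p : EuclideanSpace ℝ (Fin d) → ℝ)
    (hp : ∀ x, p x = c * ‖x‖ * (2 * π) ^ (-(d : ℝ) / 2) * (Λ.det) ^ (-(1 : ℝ) / 2) *
      Real.exp (-(1 / 2) * ((fun i => x i) ⬝ᵥ (Λ⁻¹ *ᵥ fun i => x i))))
    (hprob : ∫ x, p x = 1) :
    ∃ C : ℝ, 0 < C ∧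
      Measure.map (fun x : EuclideanSpace ℝ (Fin d) => ‖x‖⁻¹ • x)
          (volume.withDensity fun x => ENNReal.ofReal (p x)) =
        (sphereUniform d).withDensity
          (fun ζ => ENNReal.ofReal
            (C * ((fun i => ζ i) ⬝ᵥ (Λ⁻¹ *ᵥ fun i => ζ i)) ^ (-((d : ℝ) + 1) / 2))) := by
  set q : EuclideanSpace ℝ (Fin d) → ℝ := fun x => x.ofLp ⬝ᵥ (Λ⁻¹ *ᵥ x.ofLp)
  have hdet : 0 < Λ.det := hΛ.det_pos
  have hq : Continuous q :=
    (continuous_dotProduct_mulVec_self Λ⁻¹).comp (PiLp.continuous_ofLp 2 _)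
  have hq_smul (r : ℝ) (x) : q (r • x) = r ^ (2 : ℝ) * q x := by
    rw [rpow_two]
    exact dotProduct_mulVec_smul_self Λ⁻¹ r x.ofLp
  have hq_pos (x) (hx : x ≠ 0) : 0 < q x :=
    hΛ.inv.dotProduct_mulVec_pos ((WithLp.ofLp_eq_zero 2).not.2 hx)
  have hpq (x) : p x = c * (2 * π) ^ (-(d : ℝ) / 2) * Λ.det ^ (-(1 : ℝ) / 2) * ‖x‖ ^ (1 : ℝ) *
      exp (-(1 / 2) * q x) := by
    rw [hp, rpow_one, mul_right_comm c, mul_right_comm _ ‖x‖]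
  exact pushforward_normalized_density_general (by lia) hq.measurable two_pos
    (fun r _ => hq_smul r) hq_pos (by linarith [d.cast_nonneg (α := ℝ)]) (by positivity)
    one_half_pos hpq
end

section
/- Let κ ∈ Δ_+ (positive coordinates, Σκ_i² = 1), let 𝒵(κ) ∈ ℝ^d be the vector 𝒵_ℓ(κ) = C ∫_{S^{d-1}} z_ℓ² (Σ_i z_i²/κ_i²)^{-(d+1)/2} dη(z) with C^{-1} = ∫_{S^{d-1}} (Σ_i z_i²/κ_i²)^{-(d+1)/2} dη(z), and let π_i = κ_i^{-2} (C^{-1})^{2/(d+1)}. Then π is the unique minimizer over u ∈ ℝ_{>0}^d of the strictly convex function u ↦ ⟨𝒵(κ), u⟩ - Ξ(u), where Ξ(u) = -(2/(d-1)) ∫_{S^{d-1}} (Σ_i u_i z_i²)^{-(d-1)/2} dη(z). -/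
open MeasureTheory

/-!
The function `Ξ` lies strictly below its tangent hyperplanes on the positive orthant: integrate the
strict tangent inequality of `t ↦ t ^ (-(d - 1) / 2)` at `t = ∑ i, v i * z i ^ 2`; it is strict near
a coordinate vector `e_l` with `u l ≠ v l`, and the sphere is the support of `η`. This gives strict
concavity of `Ξ`, and shows that `v` is the unique minimizer of `u ↦ ⟪∇Ξ(v), u⟫ - Ξ(u)`. Finally
`∇Ξ(π) = 𝒵(κ)` because `∇Ξ` is homogeneous of degree `-(d + 1) / 2`.

That the normalized Hausdorff measure `η` is a probability measure with full support on the sphere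
is seen in the graph charts of hemispheres: the chart is locally Lipschitz and its inverse is an
orthogonal projection, so Hausdorff measure is compared with Haar measure on a hyperplane.
-/

open Metric Filter Topology Module
open scoped RealInnerProductSpace

section HausdorffSphere

variable {E : Type*} [NormedAddCommGroup E] [InnerProductSpace ℝ E]

/-- The parametrization of the hemisphere of `sphere 0 1` around the unit vector `x` as a graph
over the hyperplane orthogonal to `x`. It is a smooth inverse of the orthogonal projection. -/
noncomputable def hemisphereGraph (x : E) (y : (ℝ ∙ x)ᗮ) : E :=
  y + √(1 - ‖y‖ ^ 2) • x

variable {x : E}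

theorem hemisphereGraph_zero (x : E) : hemisphereGraph x 0 = x := by
  simp [hemisphereGraph]

theorem contDiffAt_hemisphereGraph_zero (x : E) : ContDiffAt ℝ 1 (hemisphereGraph x) 0 := by
  have hsq : ContDiffAt ℝ 1 (fun y : (ℝ ∙ x)ᗮ => 1 - ‖y‖ ^ 2) 0 :=
    contDiffAt_const.sub (contDiff_norm_sq ℝ).contDiffAt
  exact (ℝ ∙ x)ᗮ.subtypeL.contDiff.contDiffAt.add ((hsq.sqrt (by simp)).smul contDiffAt_const)

theorem norm_sq_add_smul_of_mem_orthogonal (hx : ‖x‖ = 1) (y : (ℝ ∙ x)ᗮ) (r : ℝ) :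
    ‖(y : E) + r • x‖ ^ 2 = ‖y‖ ^ 2 + r ^ 2 := by
  have hxy : ⟪(y : E), x⟫ = 0 := Submodule.mem_orthogonal_singleton_iff_inner_left.1 y.2
  simp [norm_add_sq_real, inner_smul_right, hxy, norm_smul, hx]

theorem hemisphereGraph_mem_sphere (hx : ‖x‖ = 1) {y : (ℝ ∙ x)ᗮ} (hy : ‖y‖ ≤ 1) :
    hemisphereGraph x y ∈ sphere (0 : E) 1 := by
  have hsqrt : √(1 - ‖y‖ ^ 2) ^ 2 = 1 - ‖y‖ ^ 2 :=
    Real.sq_sqrt (sub_nonneg.2 (pow_le_one₀ (norm_nonneg y) hy))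
  rw [mem_sphere_zero_iff_norm, ← sq_eq_sq₀ (norm_nonneg _) zero_le_one, hemisphereGraph,
    norm_sq_add_smul_of_mem_orthogonal hx, hsqrt]
  ring

theorem orthogonalProjectionOnto_hemisphereGraph (x : E) (y : (ℝ ∙ x)ᗮ) :
    (ℝ ∙ x)ᗮ.orthogonalProjectionOnto (hemisphereGraph x y) = y := by
  simp [hemisphereGraph, Submodule.orthogonalProjectionOnto_orthogonalComplement_singleton_eq_zero]

theorem hemisphereGraph_orthogonalProjectionOnto (hx : ‖x‖ = 1) {z : E} (hz : ‖z‖ = 1)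
    (hxz : 0 ≤ ⟪x, z⟫) :
    hemisphereGraph x ((ℝ ∙ x)ᗮ.orthogonalProjectionOnto z) = z := by
  set y := (ℝ ∙ x)ᗮ.orthogonalProjectionOnto z
  have hdecomp : (y : E) + ⟪x, z⟫ • x = z := by
    rw [← Submodule.starProjection_unit_singleton ℝ hx, add_comm]
    exact (ℝ ∙ x).starProjection_add_starProjection_orthogonal z
  have hnorm : ‖y‖ ^ 2 + ⟪x, z⟫ ^ 2 = 1 := by
    rw [← norm_sq_add_smul_of_mem_orthogonal hx, hdecomp, hz, one_pow]
  rw [hemisphereGraph, show 1 - ‖y‖ ^ 2 = ⟪x, z⟫ ^ 2 by linarith, Real.sqrt_sq hxz, hdecomp]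

variable [MeasurableSpace E] [BorelSpace E] {n : ℕ} [Fact (finrank ℝ E = n + 1)]

theorem isAddHaarMeasure_hausdorffMeasure_orthogonal_singleton (hx : x ≠ 0) :
    (μH[n] : Measure (ℝ ∙ x)ᗮ).IsAddHaarMeasure := by
  have : FiniteDimensional ℝ E := .of_fact_finrank_eq_succ n
  rw [← Submodule.finrank_orthogonal_span_singleton (𝕜 := ℝ) (n := n) hx]
  infer_instance

theorem hausdorffMeasure_pos_of_mem_nhdsWithin_sphere (hx : x ∈ sphere 0 1) {s : Set E}
    (hs : s ∈ 𝓝[sphere 0 1] x) : 0 < μH[n] s := by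
  have := isAddHaarMeasure_hausdorffMeasure_orthogonal_singleton (n := n)
    (ne_of_mem_sphere hx one_ne_zero)
  rw [mem_sphere_zero_iff_norm] at hx
  have htendsto : Tendsto (hemisphereGraph x) (𝓝 0) (𝓝[sphere 0 1] x) := by
    refine tendsto_nhdsWithin_iff.2 ⟨?_, ?_⟩
    · simpa only [hemisphereGraph_zero] using
        (contDiffAt_hemisphereGraph_zero x).continuousAt.tendsto
    · filter_upwards [closedBall_mem_nhds (0 : (ℝ ∙ x)ᗮ) one_pos] with y hy
      exact hemisphereGraph_mem_sphere hx (mem_closedBall_zero_iff.1 hy)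
  have hsub : hemisphereGraph x ⁻¹' s ⊆ (ℝ ∙ x)ᗮ.orthogonalProjectionOnto '' s := fun y hy =>
    ⟨hemisphereGraph x y, hy, orthogonalProjectionOnto_hemisphereGraph x y⟩
  calc
    0 < μH[n] (hemisphereGraph x ⁻¹' s) := Measure.measure_pos_of_mem_nhds _ (htendsto hs)
    _ ≤ μH[n] ((ℝ ∙ x)ᗮ.orthogonalProjectionOnto '' s) := measure_mono hsub
    _ ≤ μH[n] s := hausdorffMeasure_orthogonalProjectionOnto_le _ _ _ n.cast_nonneg

theorem hausdorffMeasure_finiteAtFilter_nhdsWithin_sphere (hx : x ∈ sphere 0 1) :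
    (μH[n] : Measure E).FiniteAtFilter (𝓝[sphere 0 1] x) := by
  have : FiniteDimensional ℝ E := .of_fact_finrank_eq_succ n
  have := isAddHaarMeasure_hausdorffMeasure_orthogonal_singleton (n := n)
    (ne_of_mem_sphere hx one_ne_zero)
  rw [mem_sphere_zero_iff_norm] at hx
  obtain ⟨K, t, ht, hLip⟩ := (contDiffAt_hemisphereGraph_zero x).exists_lipschitzOnWith
  obtain ⟨u, hu, hμu⟩ := (μH[n] : Measure (ℝ ∙ x)ᗮ).finiteAt_nhds 0
  have hproj : ∀ᶠ z in 𝓝 x, (ℝ ∙ x)ᗮ.orthogonalProjectionOnto z ∈ t ∩ u := by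
    refine (ℝ ∙ x)ᗮ.orthogonalProjectionOnto.continuous.continuousAt ?_
    rw [Submodule.orthogonalProjectionOnto_orthogonalComplement_singleton_eq_zero]
    exact inter_mem ht hu
  have hinner : ∀ᶠ z in 𝓝 x, 0 < ⟪x, z⟫ :=
    (by fun_prop : ContinuousAt (fun z => ⟪x, z⟫) x).eventually_const_lt (by simp [hx])
  refine ⟨hemisphereGraph x '' (t ∩ u), ?_, ?_⟩
  · filter_upwards [self_mem_nhdsWithin, hproj.filter_mono nhdsWithin_le_nhds,
      hinner.filter_mono nhdsWithin_le_nhds] with z hz hzu hxz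
    exact ⟨_, hzu,
      hemisphereGraph_orthogonalProjectionOnto hx (mem_sphere_zero_iff_norm.1 hz) hxz.le⟩
  · calc
      μH[n] (hemisphereGraph x '' (t ∩ u))
          ≤ (K : ENNReal) ^ (n : ℝ) * μH[n] (t ∩ u) :=
        (hLip.mono Set.inter_subset_left).hausdorffMeasure_image_le n.cast_nonneg
      _ < ⊤ := ENNReal.mul_lt_top (ENNReal.rpow_lt_top_of_nonneg n.cast_nonneg ENNReal.coe_ne_top)
        ((measure_mono Set.inter_subset_right).trans_lt hμu)

variable (E n) in
theorem hausdorffMeasure_sphere_lt_top : μH[n] (sphere (0 : E) 1) < ⊤ := by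
  have : FiniteDimensional ℝ E := .of_fact_finrank_eq_succ n
  exact (isCompact_sphere 0 1).measure_lt_top_of_nhdsWithin fun _ hx =>
    hausdorffMeasure_finiteAtFilter_nhdsWithin_sphere hx

end HausdorffSphere

section SphereUniform

variable {d : ℕ}

theorem sphereUniform_succ (n : ℕ) :
    sphereUniform (n + 1) = (μH[n] (sphere (0 : EuclideanSpace ℝ (Fin (n + 1))) 1))⁻¹ •
      (μH[n]).restrict (sphere (0 : EuclideanSpace ℝ (Fin (n + 1))) 1) := by
  simp [sphereUniform]

instance isProbabilityMeasure_sphereUniform [NeZero d] :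
    IsProbabilityMeasure (sphereUniform d) := by
  obtain ⟨n, rfl⟩ := Nat.exists_eq_succ_of_ne_zero (NeZero.ne d)
  have := Fact.mk (finrank_euclideanSpace_fin (𝕜 := ℝ) (n := n + 1))
  obtain ⟨x, hx⟩ := (NormedSpace.sphere_nonempty
    (x := (0 : EuclideanSpace ℝ (Fin (n + 1))))).2 zero_le_one
  have hpos := hausdorffMeasure_pos_of_mem_nhdsWithin_sphere (n := n) hx self_mem_nhdsWithin
  refine ⟨?_⟩
  rw [sphereUniform_succ, Measure.smul_apply, Measure.restrict_apply_univ, smul_eq_mul]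
  exact ENNReal.inv_mul_cancel hpos.ne' (hausdorffMeasure_sphere_lt_top _ n).ne

theorem ae_mem_sphere_sphereUniform (d : ℕ) : ∀ᵐ z ∂sphereUniform d, z ∈ sphere 0 1 :=
  Measure.ae_smul_measure (ae_restrict_mem isClosed_sphere.measurableSet) _

theorem sphere_subset_support_sphereUniform (d : ℕ) :
    sphere 0 1 ⊆ (sphereUniform d).support := by
  intro x hx
  obtain _ | n := d
  · simp [Subsingleton.elim x 0] at hx
  have := Fact.mk (finrank_euclideanSpace_fin (𝕜 := ℝ) (n := n + 1))
  refine (Measure.mem_support_iff_forall x).2 fun s hs => ?_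
  rw [sphereUniform_succ, Measure.smul_apply, smul_eq_mul,
    Measure.restrict_apply' isClosed_sphere.measurableSet]
  exact ENNReal.mul_pos (ENNReal.inv_ne_zero.2 (hausdorffMeasure_sphere_lt_top _ n).ne)
    (hausdorffMeasure_pos_of_mem_nhdsWithin_sphere hx
      (inter_mem (mem_nhdsWithin_of_mem_nhds hs) self_mem_nhdsWithin)).ne'

end SphereUniform

section IntegralCompact

variable {X : Type*} [TopologicalSpace X] [T2Space X] [MeasurableSpace X] [OpensMeasurableSpace X]
  {μ : Measure X} [IsFiniteMeasure μ] {K : Set X} {f g : X → ℝ}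

theorem integrable_of_continuousOn_isCompact (hK : IsCompact K) (hμK : ∀ᵐ x ∂μ, x ∈ K)
    (hf : ContinuousOn f K) : Integrable f μ := by
  rw [← Measure.restrict_eq_self_of_ae_mem hμK]
  exact hf.integrableOn_compact hK

theorem integral_lt_integral_of_continuousOn_isCompact (hK : IsCompact K)
    (hμK : ∀ᵐ x ∂μ, x ∈ K) (hf : ContinuousOn f K) (hg : ContinuousOn g K)
    (hle : ∀ x ∈ K, f x ≤ g x) {a : X} (haK : a ∈ K) (ha : a ∈ μ.support) (hlt : f a < g a) :
    ∫ x, f x ∂μ < ∫ x, g x ∂μ := by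
  have hfi := integrable_of_continuousOn_isCompact hK hμK hf
  have hgi := integrable_of_continuousOn_isCompact hK hμK hg
  have hnonneg : 0 ≤ᵐ[μ] fun x => g x - f x := by
    filter_upwards [hμK] with x hx using sub_nonneg.2 (hle x hx)
  have hnhds : {x | x ∈ K → f x < g x} ∈ 𝓝 a :=
    eventually_nhdsWithin_iff.1 ((hf a haK).eventually_lt (hg a haK) hlt)
  rw [← sub_pos, ← integral_sub hgi hfi,
    integral_pos_iff_support_of_nonneg_ae hnonneg (hgi.sub hfi)]
  refine ((Measure.mem_support_iff_forall a).1 ha _ hnhds).trans_le (measure_mono_ae ?_)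
  filter_upwards [hμK] with x hxK hx using (sub_pos.2 (hx hxK)).ne'

end IntegralCompact

theorem rpow_neg_tangent_lt {p s t : ℝ} (hp : 0 < p) (hs : 0 < s) (ht : 0 < t) (hst : s ≠ t) :
    t ^ (-p) - p * t ^ (-p - 1) * (s - t) < s ^ (-p) := by
  have hr : 0 < s / t := div_pos hs ht
  have hlog : Real.log (s / t) < s / t - 1 :=
    Real.log_lt_sub_one_of_pos hr ((div_eq_one_iff_eq ht.ne').not.2 hst)
  have hscaled : 1 - p * (s / t - 1) < (s / t) ^ (-p) :=
    calc
      1 - p * (s / t - 1) < 1 - p * Real.log (s / t) := by gcongr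
      _ = Real.log (s / t) * -p + 1 := by ring
      _ ≤ Real.exp (Real.log (s / t) * -p) := Real.add_one_le_exp _
      _ = (s / t) ^ (-p) := (Real.rpow_def_of_pos hr _).symm
  calc
    t ^ (-p) - p * t ^ (-p - 1) * (s - t) = t ^ (-p) * (1 - p * (s / t - 1)) := by
      rw [Real.rpow_sub_one ht.ne']
      field_simp
    _ < t ^ (-p) * (s / t) ^ (-p) := by gcongr
    _ = s ^ (-p) := by rw [← Real.mul_rpow ht.le hr.le, mul_div_cancel₀ _ ht.ne']

theorem rpow_neg_tangent_le {p s t : ℝ} (hp : 0 < p) (hs : 0 < s) (ht : 0 < t) :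
    t ^ (-p) - p * t ^ (-p - 1) * (s - t) ≤ s ^ (-p) := by
  rcases eq_or_ne s t with rfl | hst
  · simp
  · exact (rpow_neg_tangent_lt hp hs ht hst).le

section DiagonalForm

variable {ι : Type*} [Fintype ι] {u v : ι → ℝ}

theorem sum_mul_sq_pos (hu : ∀ i, 0 < u i) {z : EuclideanSpace ℝ ι} (hz : z ≠ 0) :
    0 < ∑ i, u i * z i ^ 2 := by
  obtain ⟨l, hl⟩ : ∃ l, z l ≠ 0 := by
    by_contra! h
    exact hz (PiLp.ext h)
  exact Finset.sum_pos' (fun i _ => mul_nonneg (hu i).le (sq_nonneg _))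
    ⟨l, Finset.mem_univ l, mul_pos (hu l) (sq_pos_of_ne_zero hl)⟩

theorem continuousOn_sum_mul_sq_rpow (hu : ∀ i, 0 < u i) (p : ℝ) :
    ContinuousOn (fun z : EuclideanSpace ℝ ι => (∑ i, u i * z i ^ 2) ^ p) (sphere 0 1) :=
  ContinuousOn.rpow_const (by fun_prop) fun _ hz =>
    Or.inl (sum_mul_sq_pos hu (ne_of_mem_sphere hz one_ne_zero)).ne'

variable {η : Measure (EuclideanSpace ℝ ι)} [IsFiniteMeasure η]

theorem integral_sum_mul_sq_rpow_pos (hη : ∀ᵐ z ∂η, z ∈ sphere 0 1) [NeZero η]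
    (hu : ∀ i, 0 < u i) (p : ℝ) : 0 < ∫ z, (∑ i, u i * z i ^ 2) ^ p ∂η := by
  have hpos : ∀ᵐ z ∂η, 0 < (∑ i, u i * z i ^ 2) ^ p := by
    filter_upwards [hη] with z hz
    exact Real.rpow_pos_of_pos (sum_mul_sq_pos hu (ne_of_mem_sphere hz one_ne_zero)) p
  rw [integral_pos_iff_support_of_nonneg_ae (hpos.mono fun _ => le_of_lt)
    (integrable_of_continuousOn_isCompact (isCompact_sphere 0 1) hη
      (continuousOn_sum_mul_sq_rpow hu p))]
  refine (Measure.measure_univ_pos.2 (NeZero.ne η)).trans_le (measure_mono_ae ?_)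
  filter_upwards [hpos] with z hz _ using hz.ne'

theorem integral_sum_mul_sq_rpow_tangent (hη : ∀ᵐ z ∂η, z ∈ sphere 0 1) (hv : ∀ i, 0 < v i)
    (u : ι → ℝ) (p : ℝ) :
    ∫ z, ((∑ i, v i * z i ^ 2) ^ (-p) - p * (∑ i, v i * z i ^ 2) ^ (-p - 1) *
        (∑ i, u i * z i ^ 2 - ∑ i, v i * z i ^ 2)) ∂η =
      ∫ z, (∑ i, v i * z i ^ 2) ^ (-p) ∂η -
        p * ∑ l, (u l - v l) * ∫ z, z l ^ 2 * (∑ i, v i * z i ^ 2) ^ (-p - 1) ∂η := by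
  have hvalue : Integrable (fun z => (∑ i, v i * z i ^ 2) ^ (-p)) η :=
    integrable_of_continuousOn_isCompact (isCompact_sphere 0 1) hη
      (continuousOn_sum_mul_sq_rpow hv _)
  have hpartial (l : ι) : Integrable
      (fun z => (u l - v l) * (z l ^ 2 * (∑ i, v i * z i ^ 2) ^ (-p - 1))) η :=
    (integrable_of_continuousOn_isCompact (isCompact_sphere 0 1) hη
      (ContinuousOn.mul (by fun_prop) (continuousOn_sum_mul_sq_rpow hv _))).const_mul _
  have hexpand (z : EuclideanSpace ℝ ι) :
      p * (∑ i, v i * z i ^ 2) ^ (-p - 1) * (∑ i, u i * z i ^ 2 - ∑ i, v i * z i ^ 2) =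
        p * ∑ l, (u l - v l) * (z l ^ 2 * (∑ i, v i * z i ^ 2) ^ (-p - 1)) := by
    rw [mul_assoc, ← Finset.sum_sub_distrib, Finset.mul_sum]
    congr! 2 with l
    ring
  simp only [hexpand]
  rw [integral_sub hvalue ((integrable_finsetSum _ fun l _ => hpartial l).const_mul p),
    integral_const_mul, integral_finsetSum _ fun l _ => hpartial l]
  simp only [integral_const_mul]

theorem integral_sum_mul_sq_rpow_tangent_lt (hη : ∀ᵐ z ∂η, z ∈ sphere 0 1)
    (hsupp : sphere 0 1 ⊆ η.support) (hu : ∀ i, 0 < u i) (hv : ∀ i, 0 < v i) (huv : u ≠ v)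
    {p : ℝ} (hp : 0 < p) :
    ∫ z, (∑ i, v i * z i ^ 2) ^ (-p) ∂η -
        p * ∑ l, (u l - v l) * ∫ z, z l ^ 2 * (∑ i, v i * z i ^ 2) ^ (-p - 1) ∂η <
      ∫ z, (∑ i, u i * z i ^ 2) ^ (-p) ∂η := by
  classical
  obtain ⟨l, hl⟩ := Function.ne_iff.1 huv
  have hsingle : EuclideanSpace.single l (1 : ℝ) ∈ sphere 0 1 := by simp
  have hform (w : ι → ℝ) : ∑ i, w i * EuclideanSpace.single l (1 : ℝ) i ^ 2 = w l := by
    simp [PiLp.single_apply]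
  rw [← integral_sum_mul_sq_rpow_tangent hη hv]
  refine integral_lt_integral_of_continuousOn_isCompact (isCompact_sphere 0 1) hη ?_
    (continuousOn_sum_mul_sq_rpow hu _) (fun z hz => ?_) hsingle (hsupp hsingle) ?_
  · exact (continuousOn_sum_mul_sq_rpow hv _).sub
      ((continuousOn_const.mul (continuousOn_sum_mul_sq_rpow hv _)).mul (by fun_prop))
  · have hz₀ := ne_of_mem_sphere hz one_ne_zero
    exact rpow_neg_tangent_le hp (sum_mul_sq_pos hu hz₀) (sum_mul_sq_pos hv hz₀)
  · simp only [hform]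
    exact rpow_neg_tangent_lt hp (hu l) (hv l) hl

end DiagonalForm

theorem strictConcaveOn_of_lt_tangent {E : Type*} [AddCommGroup E] [Module ℝ E] {s : Set E}
    (hs : Convex ℝ s) {f : E → ℝ} (g : E → E →ₗ[ℝ] ℝ)
    (hfg : ∀ u ∈ s, ∀ v ∈ s, u ≠ v → f u < f v + g v (u - v)) : StrictConcaveOn ℝ s f := by
  refine ⟨hs, fun x hx y hy hxy a b ha hb hab => ?_⟩
  set w := a • x + b • y with hw
  obtain rfl : a = 1 - b := eq_sub_of_add_eq hab
  have hws : w ∈ s := hs hx hy ha.le hb.le hab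
  have hxw : x - w = b • (x - y) := by rw [hw]; module
  have hyw : y - w = (1 - b) • (y - x) := by rw [hw]; module
  have hfx : f x < f w + g w (x - w) := hfg x hx w hws <| sub_ne_zero.1 <| by
    rw [hxw]
    exact smul_ne_zero hb.ne' (sub_ne_zero.2 hxy)
  have hfy : f y < f w + g w (y - w) := hfg y hy w hws <| sub_ne_zero.1 <| by
    rw [hyw]
    exact smul_ne_zero ha.ne' (sub_ne_zero.2 hxy.symm)
  calc
    (1 - b) • f x + b • f y < (1 - b) • (f w + g w (x - w)) + b • (f w + g w (y - w)) := by
      gcongr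
    _ = f w := by
      simp only [hxw, hyw, map_smul, map_sub, smul_eq_mul]
      ring

section Xi

variable {d : ℕ} {u v : EuclideanSpace ℝ (Fin d)}

/-- The gradient of `Xi d`, obtained by formal differentiation under the integral sign. It enters
only through the tangent inequality `Xi_lt_add_inner_gradXi`. -/
noncomputable def gradXi (d : ℕ) (u : EuclideanSpace ℝ (Fin d)) : EuclideanSpace ℝ (Fin d) :=
  WithLp.toLp 2 fun l =>
    ∫ z, z l ^ 2 * (∑ i, u i * z i ^ 2) ^ (-((d : ℝ) + 1) / 2) ∂sphereUniform d

theorem Xi_lt_add_inner_gradXi (hd : 2 ≤ d) (hu : ∀ i, 0 < u i) (hv : ∀ i, 0 < v i)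
    (huv : u ≠ v) : Xi d u < Xi d v + ⟪gradXi d v, u - v⟫ := by
  have : NeZero d := ⟨by lia⟩
  set p : ℝ := ((d : ℝ) - 1) / 2 with hp
  have hp₀ : 0 < p := half_pos (sub_pos.2 (Nat.one_lt_cast.2 hd))
  have hexp : -((d : ℝ) - 1) / 2 = -p := by rw [hp]; ring
  have hexp_grad : -((d : ℝ) + 1) / 2 = -p - 1 := by rw [hp]; ring
  have hcoef : 2 / ((d : ℝ) - 1) = p⁻¹ := by rw [hp, inv_div]
  have htangent := integral_sum_mul_sq_rpow_tangent_lt (ae_mem_sphere_sphereUniform d)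
    (sphere_subset_support_sphereUniform d) hu hv ((WithLp.ofLp_injective 2).ne huv) hp₀
  have hinner : ⟪gradXi d v, u - v⟫ = ∑ l, (u l - v l) *
      ∫ z, z l ^ 2 * (∑ i, v i * z i ^ 2) ^ (-p - 1) ∂sphereUniform d := by
    simp only [PiLp.inner_apply, RCLike.inner_apply, conj_trivial, PiLp.sub_apply, gradXi,
      hexp_grad]
  rw [hinner, Xi, Xi, hexp, hcoef]
  have := mul_lt_mul_of_pos_left htangent (inv_pos.2 hp₀)
  rw [mul_sub, inv_mul_cancel_left₀ hp₀.ne'] at this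
  linarith

theorem convex_setOf_forall_pos (ι : Type*) :
    Convex ℝ {u : EuclideanSpace ℝ ι | ∀ i, 0 < u i} := by
  rw [Set.ofPred_forall]
  exact convex_iInter fun i => convex_halfSpace_gt (PiLp.projₗ 2 (fun _ : ι => ℝ) i).isLinear 0

theorem strictConcaveOn_Xi (hd : 2 ≤ d) :
    StrictConcaveOn ℝ {u : EuclideanSpace ℝ (Fin d) | ∀ i, 0 < u i} (Xi d) :=
  strictConcaveOn_of_lt_tangent (convex_setOf_forall_pos _) (fun v => innerₗ _ (gradXi d v))
    fun _ hu _ hv huv => Xi_lt_add_inner_gradXi hd hu hv huv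

theorem gradXi_smul (hu : ∀ i, 0 ≤ u i) {c : ℝ} (hc : 0 ≤ c) :
    gradXi d (c • u) = c ^ (-((d : ℝ) + 1) / 2) • gradXi d u := by
  ext l
  have hintegrand (z : EuclideanSpace ℝ (Fin d)) :
      z l ^ 2 * (∑ i, (c • u) i * z i ^ 2) ^ (-((d : ℝ) + 1) / 2) =
        c ^ (-((d : ℝ) + 1) / 2) *
          (z l ^ 2 * (∑ i, u i * z i ^ 2) ^ (-((d : ℝ) + 1) / 2)) := by
    rw [mul_left_comm, ← Real.mul_rpow hc
      (Finset.sum_nonneg fun i _ => mul_nonneg (hu i) (sq_nonneg _)), Finset.mul_sum]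
    simp only [PiLp.smul_apply, smul_eq_mul, mul_assoc]
  simp only [gradXi, hintegrand, integral_const_mul]
  rfl

theorem gradXi_rpow_smul (hu : ∀ i, 0 ≤ u i) {a : ℝ} (ha : 0 ≤ a) :
    gradXi d (a ^ ((2 : ℝ) / (d + 1)) • u) = a⁻¹ • gradXi d u := by
  have hexp : (2 : ℝ) / (d + 1) * (-(d + 1) / 2) = -1 := by field_simp
  rw [gradXi_smul hu (Real.rpow_nonneg ha _), ← Real.rpow_mul ha, hexp, Real.rpow_neg_one]

theorem strictConvexOn_inner_sub_Xi (hd : 2 ≤ d) (w : EuclideanSpace ℝ (Fin d)) :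
    StrictConvexOn ℝ {u : EuclideanSpace ℝ (Fin d) | ∀ i, 0 < u i} fun u => ⟪w, u⟫ - Xi d u := by
  have hXi := strictConcaveOn_Xi hd
  exact ((innerₗ _ w).convexOn hXi.1).sub_strictConcaveOn hXi

theorem inner_gradXi_sub_Xi_lt (hd : 2 ≤ d) (hu : ∀ i, 0 < u i) (hv : ∀ i, 0 < v i)
    (huv : u ≠ v) : ⟪gradXi d v, v⟫ - Xi d v < ⟪gradXi d v, u⟫ - Xi d u := by
  have htangent := Xi_lt_add_inner_gradXi hd hu hv huv
  rw [inner_sub_right] at htangent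
  linarith

end Xi

theorem pi_unique_minimizer_general (d : ℕ) (hd : 2 ≤ d)
    (κ : Fin d → ℝ) (hκ : ∀ i, κ i ≠ 0)
    (C : ℝ)
    (hC : C = (∫ z, (∑ i, z i ^ 2 / κ i ^ 2) ^ (-((d : ℝ) + 1) / 2)
      ∂(sphereUniform d))⁻¹)
    (Z : Fin d → ℝ)
    (hZ : ∀ ℓ, Z ℓ = C * ∫ z, z ℓ ^ 2 * (∑ i, z i ^ 2 / κ i ^ 2) ^ (-((d : ℝ) + 1) / 2)
      ∂(sphereUniform d))
    (piv : EuclideanSpace ℝ (Fin d))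
    (hpiv : ∀ i, piv i = (C⁻¹ ^ ((2 : ℝ) / ((d : ℝ) + 1))) / κ i ^ 2)
    (F : EuclideanSpace ℝ (Fin d) → ℝ)
    (hF : ∀ u, F u = (∑ ℓ, Z ℓ * u ℓ) - Xi d u) :
    StrictConvexOn ℝ {u : EuclideanSpace ℝ (Fin d) | ∀ i, 0 < u i} F ∧
    (∀ i, 0 < piv i) ∧
    (∀ u : EuclideanSpace ℝ (Fin d), (∀ i, 0 < u i) → u ≠ piv → F piv < F u) := by
  have : NeZero d := ⟨by lia⟩
  let k : EuclideanSpace ℝ (Fin d) := WithLp.toLp 2 fun i => (κ i ^ 2)⁻¹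
  have hk (i : Fin d) : 0 < k i := inv_pos.2 (sq_pos_of_ne_zero (hκ i))
  have hform (z : EuclideanSpace ℝ (Fin d)) : ∑ i, z i ^ 2 / κ i ^ 2 = ∑ i, k i * z i ^ 2 := by
    simp only [k, div_eq_inv_mul]
  simp only [hform] at hC hZ
  have hC₀ : 0 < C := hC ▸ inv_pos.2
    (integral_sum_mul_sq_rpow_pos (ae_mem_sphere_sphereUniform d) hk _)
  have hpiv_eq : piv = C⁻¹ ^ ((2 : ℝ) / (d + 1)) • k := by
    ext i
    simp [hpiv, k, div_eq_mul_inv]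
  have hpiv₀ (i : Fin d) : 0 < piv i := by
    rw [hpiv]
    exact div_pos (Real.rpow_pos_of_pos (inv_pos.2 hC₀) _) (sq_pos_of_ne_zero (hκ i))
  have hgrad (l : Fin d) : Z l = gradXi d piv l := by
    rw [hpiv_eq, gradXi_rpow_smul (fun i => (hk i).le) (inv_nonneg.2 hC₀.le), inv_inv, hZ]
    rfl
  have hF_inner : F = fun u => ⟪gradXi d piv, u⟫ - Xi d u := by
    ext u
    simp [hF, hgrad, PiLp.inner_apply, mul_comm]
  rw [hF_inner]
  exact ⟨strictConvexOn_inner_sub_Xi hd _, hpiv₀, fun u hu hne =>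
    inner_gradXi_sub_Xi_lt hd hu hpiv₀ hne⟩

/-- with `𝒵_ℓ(κ) = C ∫ z_ℓ² (Σ z_i²/κ_i²)^{-(d+1)/2} dη`,
`C^{-1} = ∫ (Σ z_i²/κ_i²)^{-(d+1)/2} dη` and `π_i = κ_i^{-2} (C^{-1})^{2/(d+1)}`,
the point `π` is the unique minimizer over `ℝ_{>0}^d` of the strictly convex function
`u ↦ ⟨𝒵(κ), u⟩ - Ξ(u)`. -/
theorem pi_unique_minimizer (d : ℕ) (hd : 2 ≤ d)
    (κ : Fin d → ℝ) (hκpos : ∀ i, 0 < κ i) (hκnorm : ∑ i, κ i ^ 2 = 1)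
    (C : ℝ)
    (hC : C = (∫ z, (∑ i, z i ^ 2 / κ i ^ 2) ^ (-((d : ℝ) + 1) / 2)
      ∂(sphereUniform d))⁻¹)
    (Z : Fin d → ℝ)
    (hZ : ∀ ℓ, Z ℓ = C * ∫ z, z ℓ ^ 2 * (∑ i, z i ^ 2 / κ i ^ 2) ^ (-((d : ℝ) + 1) / 2)
      ∂(sphereUniform d))
    (piv : EuclideanSpace ℝ (Fin d))
    (hpiv : ∀ i, piv i = (C⁻¹ ^ ((2 : ℝ) / ((d : ℝ) + 1))) / κ i ^ 2)
    (F : EuclideanSpace ℝ (Fin d) → ℝ)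
    (hF : ∀ u, F u = (∑ ℓ, Z ℓ * u ℓ) - Xi d u) :
    StrictConvexOn ℝ {u : EuclideanSpace ℝ (Fin d) | ∀ i, 0 < u i} F ∧
    (∀ i, 0 < piv i) ∧
    (∀ u : EuclideanSpace ℝ (Fin d), (∀ i, 0 < u i) → u ≠ piv → F piv < F u) :=
  pi_unique_minimizer_general d hd κ (fun i => (hκpos i).ne') C hC Z hZ piv hpiv F hF
end

section
/- Let Λ be symmetric positive definite on ℝ^d and η the uniform probability measure on S^{d-1}. For p > 0 define M_p = ∫_{S^{d-1}} ζζᵀ (ζᵀΛ^{-1}ζ)^{-p} dη(ζ). Then M_p commutes with Λ; in fact, if Λ = PᵀDP with P orthogonal and D diagonal, then P M_p Pᵀ is diagonal. Consequently the covariance matrices of the full gradient weighting (p = (d+2)/2) and of the normalized gradient weighting (p = (d+1)/2) have exactly the same eigenvectors, the rows of P. -/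
open MeasureTheory Matrix

/-- `M_p = ∫_{S^{d-1}} ζζᵀ (ζᵀΛ^{-1}ζ)^{-p} dη(ζ)`. -/
noncomputable def Mmat (d : ℕ) (Λ : Matrix (Fin d) (Fin d) ℝ) (p : ℝ) :
    Matrix (Fin d) (Fin d) ℝ :=
  Matrix.of fun i j =>
    ∫ ζ, ζ i * ζ j * ((fun k => ζ k) ⬝ᵥ (Λ⁻¹ *ᵥ fun k => ζ k)) ^ (-p)
      ∂(sphereUniform d)

/-!
Since `η` is invariant under orthogonal maps, the substitution `z = Pζ` turns `P M_p Pᵀ` into the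
matrix `M_p` built from `PΛPᵀ = D`, whose weight `(∑ zᵢ² / Dᵢ)⁻ᵖ` is even in each coordinate.
Reflecting one coordinate therefore flips the sign of every off-diagonal entry, so these vanish.
Finally, `M_p` and `Λ` commute because conjugation by `P` diagonalizes both.
-/

section Matrix

variable {n R : Type*} [Fintype n] [DecidableEq n]

theorem commute_of_isDiag_conj [CommSemiring R] {P Q A B : Matrix n n R} (hQP : Q * P = 1)
    (hA : (P * A * Q).IsDiag) (hB : (P * B * Q).IsDiag) : Commute A B := by
  have mul_eq_conj (X Y : Matrix n n R) : X * Y = Q * ((P * X * Q) * (P * Y * Q)) * P :=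
    calc X * Y = (Q * P) * X * (Q * P) * Y * (Q * P) := by simp [hQP]
      _ = Q * ((P * X * Q) * (P * Y * Q)) * P := by simp only [Matrix.mul_assoc]
  have hcomm : Commute (P * A * Q) (P * B * Q) := by
    rw [← hA.diagonal_diag, ← hB.diagonal_diag]
    exact commute_diagonal _ _
  rw [commute_iff_eq, mul_eq_conj, hcomm.eq, ← mul_eq_conj]

theorem mulVec_dotProduct_inv_conj_mulVec [CommRing R] {A : Matrix n n R} (hA : IsUnit A.det)
    (B : Matrix n n R) (x : n → R) :
    (A *ᵥ x) ⬝ᵥ ((A * B * Aᵀ)⁻¹ *ᵥ (A *ᵥ x)) = x ⬝ᵥ (B⁻¹ *ᵥ x) := by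
  have hcancel : Aᵀ * ((A * B * Aᵀ)⁻¹ * A) = B⁻¹ := by
    rw [Matrix.mul_inv_rev, Matrix.mul_inv_rev, Matrix.mul_assoc, Matrix.mul_assoc,
      nonsing_inv_mul _ hA, Matrix.mul_one,
      mul_nonsing_inv_cancel_left _ _ (by rwa [det_transpose])]
  rw [mulVec_mulVec, ← hcancel, ← mulVec_mulVec _ Aᵀ, dotProduct_mulVec x, vecMul_transpose]

end Matrix

section EuclideanMaps

variable {n : Type*} [Fintype n] [DecidableEq n]

/-- The reflection `x_i ↦ -x_i` of Euclidean space, fixing all other coordinates. -/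
noncomputable def coordReflection (i : n) : EuclideanSpace ℝ n ≃ₗᵢ[ℝ] EuclideanSpace ℝ n :=
  LinearIsometryEquiv.piLpCongrRight 2 fun k =>
    if k = i then LinearIsometryEquiv.neg ℝ else LinearIsometryEquiv.refl ℝ ℝ

theorem coordReflection_apply_self (i : n) (x : EuclideanSpace ℝ n) :
    coordReflection i x i = -x i := by
  simp [coordReflection]

theorem coordReflection_apply_of_ne {i k : n} (h : k ≠ i) (x : EuclideanSpace ℝ n) :
    coordReflection i x k = x k := by
  simp [coordReflection, h]

theorem dotProduct_diagonal_mulVec_coordReflection (v : n → ℝ) (i : n) (x : EuclideanSpace ℝ n) :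
    (coordReflection i x).ofLp ⬝ᵥ (diagonal v *ᵥ (coordReflection i x).ofLp) =
      x.ofLp ⬝ᵥ (diagonal v *ᵥ x.ofLp) := by
  refine Finset.sum_congr rfl fun k _ => ?_
  rcases eq_or_ne k i with rfl | h
  · simp [mulVec_diagonal, coordReflection_apply_self]
  · simp [mulVec_diagonal, coordReflection_apply_of_ne h]

/-- The linear isometry `x ↦ U x` of Euclidean space given by an orthogonal matrix `U`. -/
noncomputable def orthogonalIsometry (U : orthogonalGroup n ℝ) :
    EuclideanSpace ℝ n ≃ₗᵢ[ℝ] EuclideanSpace ℝ n :=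
  Unitary.linearIsometryEquiv ⟨toEuclideanCLM (𝕜 := ℝ) (U : Matrix n n ℝ), Unitary.map_mem _ U.2⟩

theorem ofLp_orthogonalIsometry (U : orthogonalGroup n ℝ) (x : EuclideanSpace ℝ n) :
    (orthogonalIsometry U x).ofLp = (U : Matrix n n ℝ) *ᵥ x.ofLp :=
  rfl

end EuclideanMaps

theorem continuousOn_rpow_dotProduct_mulVec {n : Type*} [Fintype n] {A : Matrix n n ℝ}
    (hA : A.PosDef) (q : ℝ) :
    ContinuousOn (fun x : EuclideanSpace ℝ n => (x.ofLp ⬝ᵥ (A *ᵥ x.ofLp)) ^ q) {0}ᶜ := by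
  refine ContinuousOn.rpow_const ?_ fun x hx => Or.inl ?_
  · simp only [dotProduct, mulVec]
    fun_prop
  · have hx' : x.ofLp ≠ 0 := by simpa using hx
    simpa using (hA.dotProduct_mulVec_pos hx').ne'

section WeightedSecondMoment

variable {m n : Type*}

/-- The second moment matrix `∫ x xᵀ w(x) dμ(x)` of a measure `μ` on Euclidean space with
respect to a weight `w`, as the matrix of entrywise integrals. -/
noncomputable def weightedSecondMoment (μ : Measure (EuclideanSpace ℝ n))
    (w : EuclideanSpace ℝ n → ℝ) : Matrix n n ℝ :=
  Matrix.of fun i j => ∫ x, x i * x j * w x ∂μ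

variable [Fintype n] {μ : Measure (EuclideanSpace ℝ n)} {w : EuclideanSpace ℝ n → ℝ}

theorem mul_weightedSecondMoment_mul_transpose
    (hw : ∀ i j, Integrable (fun x => x i * x j * w x) μ) (A : Matrix m n ℝ) :
    A * weightedSecondMoment μ w * Aᵀ =
      Matrix.of fun i j => ∫ x, (A *ᵥ x.ofLp) i * (A *ᵥ x.ofLp) j * w x ∂μ := by
  ext i j
  have hterm (k l : n) : Integrable (fun x => A i k * (x k * x l * w x) * A j l) μ :=
    ((hw k l).const_mul _).mul_const _
  calc (A * weightedSecondMoment μ w * Aᵀ) i j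
      = ∑ l, ∑ k, ∫ x, A i k * (x k * x l * w x) * A j l ∂μ := by
        simp only [weightedSecondMoment, mul_apply, of_apply, transpose_apply, Finset.sum_mul,
          integral_const_mul, integral_mul_const]
    _ = ∫ x, ∑ l, ∑ k, A i k * (x k * x l * w x) * A j l ∂μ := by
        rw [integral_finsetSum _ fun l _ => integrable_finsetSum _ fun k _ => hterm k l]
        simp_rw [integral_finsetSum _ fun k _ => hterm k _]
    _ = ∫ x, (A *ᵥ x.ofLp) i * (A *ᵥ x.ofLp) j * w x ∂μ := by
        congr 1 with x
        simp only [mulVec, dotProduct, Finset.sum_mul, Finset.mul_sum]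
        refine Finset.sum_congr rfl fun l _ => Finset.sum_congr rfl fun k _ => ?_
        ring

variable [DecidableEq n]

theorem orthogonal_conj_weightedSecondMoment (U : orthogonalGroup n ℝ)
    {ν : Measure (EuclideanSpace ℝ n)} (hU : MeasurePreserving (orthogonalIsometry U) μ ν)
    {v : EuclideanSpace ℝ n → ℝ} (hv : ∀ x, v (orthogonalIsometry U x) = w x)
    (hw : ∀ i j, Integrable (fun x => x i * x j * w x) μ) :
    (U : Matrix n n ℝ) * weightedSecondMoment μ w * (U : Matrix n n ℝ)ᵀ =
      weightedSecondMoment ν v := by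
  rw [mul_weightedSecondMoment_mul_transpose hw]
  ext i j
  have hchange := hU.integral_comp (orthogonalIsometry U).toHomeomorph.measurableEmbedding
    fun z => z i * z j * v z
  simpa only [hv, ofLp_orthogonalIsometry, weightedSecondMoment, of_apply] using hchange

theorem isDiag_weightedSecondMoment (hμ : ∀ i, MeasurePreserving (coordReflection i) μ μ)
    (hw : ∀ i x, w (coordReflection i x) = w x) : (weightedSecondMoment μ w).IsDiag := by
  intro i j hij
  have hflip : ∫ x, x i * x j * w x ∂μ = -∫ x, x i * x j * w x ∂μ :=
    calc ∫ x, x i * x j * w x ∂μ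
        = ∫ x, coordReflection j x i * coordReflection j x j * w (coordReflection j x) ∂μ :=
          ((hμ j).integral_comp (coordReflection j).toHomeomorph.measurableEmbedding
            fun x => x i * x j * w x).symm
      _ = -∫ x, x i * x j * w x ∂μ := by
          simp only [coordReflection_apply_of_ne hij, coordReflection_apply_self, hw, mul_neg,
            neg_mul, integral_neg]
  exact self_eq_neg.mp hflip

end WeightedSecondMoment

section SphereUniform

variable {d : ℕ}

theorem measurePreserving_sphereUniform
    (e : EuclideanSpace ℝ (Fin d) ≃ₗᵢ[ℝ] EuclideanSpace ℝ (Fin d)) :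
    MeasurePreserving e (sphereUniform d) (sphereUniform d) := by
  have hsphere : e ⁻¹' Metric.sphere 0 1 = Metric.sphere 0 1 := by
    simp
  have hrestrict := (e.toIsometryEquiv.measurePreserving_hausdorffMeasure
    ((d : ℝ) - 1)).restrict_preimage
      (Metric.isClosed_sphere (x := (0 : EuclideanSpace ℝ (Fin d))) (ε := 1)).measurableSet
  rw [LinearIsometryEquiv.coe_toIsometryEquiv, hsphere] at hrestrict
  exact hrestrict.smul_measure _

-- This needs no bound on the Hausdorff measure of the sphere: if that were `0` or `∞`, then the
-- normalized measure would be zero.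
instance isFiniteMeasure_sphereUniform (d : ℕ) : IsFiniteMeasure (sphereUniform d) :=
  inferInstanceAs (IsFiniteMeasure (ProbabilityTheory.cond
    (μH[(d : ℝ) - 1]) (Metric.sphere (0 : EuclideanSpace ℝ (Fin d)) 1)))

theorem sphereUniform_restrict_sphere :
    (sphereUniform d).restrict (Metric.sphere 0 1) = sphereUniform d := by
  rw [sphereUniform, Measure.restrict_smul,
    Measure.restrict_restrict Metric.isClosed_sphere.measurableSet, Set.inter_self]

theorem integrable_sphereUniform_of_continuousOn {F : Type*} [NormedAddCommGroup F]
    {f : EuclideanSpace ℝ (Fin d) → F} (hf : ContinuousOn f (Metric.sphere 0 1)) :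
    Integrable f (sphereUniform d) := by
  rw [← sphereUniform_restrict_sphere]
  exact hf.integrableOn_compact (isCompact_sphere _ _)

end SphereUniform

section Mmat

variable {d : ℕ} {Λ : Matrix (Fin d) (Fin d) ℝ}

theorem Mmat_eq_weightedSecondMoment (Λ : Matrix (Fin d) (Fin d) ℝ) (p : ℝ) :
    Mmat d Λ p = weightedSecondMoment (sphereUniform d)
      fun ζ => (ζ.ofLp ⬝ᵥ (Λ⁻¹ *ᵥ ζ.ofLp)) ^ (-p) :=
  rfl

theorem integrable_Mmat_integrand (hΛ : Λ.PosDef) (p : ℝ) (i j : Fin d) :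
    Integrable (fun ζ : EuclideanSpace ℝ (Fin d) =>
      ζ i * ζ j * (ζ.ofLp ⬝ᵥ (Λ⁻¹ *ᵥ ζ.ofLp)) ^ (-p)) (sphereUniform d) := by
  refine integrable_sphereUniform_of_continuousOn (ContinuousOn.mul (by fun_prop) ?_)
  refine (continuousOn_rpow_dotProduct_mulVec hΛ.inv (-p)).mono fun ζ hζ => ?_
  exact ne_zero_of_mem_unit_sphere ⟨ζ, hζ⟩

theorem orthogonal_conj_Mmat (hΛ : Λ.PosDef) (U : orthogonalGroup (Fin d) ℝ) (p : ℝ) :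
    (U : Matrix (Fin d) (Fin d) ℝ) * Mmat d Λ p * (U : Matrix (Fin d) (Fin d) ℝ)ᵀ =
      Mmat d (U * Λ * (U : Matrix (Fin d) (Fin d) ℝ)ᵀ) p := by
  have hdet : IsUnit (U : Matrix (Fin d) (Fin d) ℝ).det := UnitaryGroup.det_isUnit U
  refine orthogonal_conj_weightedSecondMoment U (measurePreserving_sphereUniform _) (fun ζ => ?_)
    (integrable_Mmat_integrand hΛ p)
  exact congrArg (· ^ (-p)) (mulVec_dotProduct_inv_conj_mulVec hdet Λ ζ.ofLp)

theorem isDiag_Mmat_diagonal (D : Fin d → ℝ) (p : ℝ) : (Mmat d (diagonal D) p).IsDiag := by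
  rw [Mmat_eq_weightedSecondMoment]
  refine isDiag_weightedSecondMoment (fun i => measurePreserving_sphereUniform _) fun i x => ?_
  rw [inv_diagonal, dotProduct_diagonal_mulVec_coordReflection]

end Mmat

theorem Mmat_commutes_and_diagonal_general {d : ℕ} {Λ : Matrix (Fin d) (Fin d) ℝ} (hΛ : Λ.PosDef)
    {P : Matrix (Fin d) (Fin d) ℝ} (hP : P ∈ Matrix.orthogonalGroup (Fin d) ℝ)
    {D : Fin d → ℝ} (hD : Λ = Pᵀ * Matrix.diagonal D * P) (p : ℝ) :
    Mmat d Λ p * Λ = Λ * Mmat d Λ p ∧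
      ∃ dvec : Fin d → ℝ, P * Mmat d Λ p * Pᵀ = Matrix.diagonal dvec := by
  have hPP : Pᵀ * P = 1 := (mem_orthogonalGroup_iff' (Fin d) ℝ).1 hP
  have hPP' : P * Pᵀ = 1 := (mem_orthogonalGroup_iff (Fin d) ℝ).1 hP
  have hΛdiag : P * Λ * Pᵀ = diagonal D :=
    calc P * Λ * Pᵀ = (P * Pᵀ) * diagonal D * (P * Pᵀ) := by simp only [hD, Matrix.mul_assoc]
      _ = diagonal D := by simp [hPP']
  have hMdiag : (P * Mmat d Λ p * Pᵀ).IsDiag := by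
    rw [orthogonal_conj_Mmat hΛ ⟨P, hP⟩, hΛdiag]
    exact isDiag_Mmat_diagonal D p
  refine ⟨commute_of_isDiag_conj hPP hMdiag ?_, _, hMdiag.diagonal_diag.symm⟩
  exact hΛdiag ▸ isDiag_diagonal D

/-- for `Λ = Pᵀ D P` symmetric positive definite (`P` orthogonal, `D`
diagonal) and every `p > 0`, the matrix `M_p` commutes with `Λ` and `P M_p Pᵀ` is
diagonal; consequently the matrices `M_{(d+2)/2}` (full gradient weighting) and
`M_{(d+1)/2}` (normalized gradient weighting) have exactly the same eigenvectors, the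
rows of `P`. -/
theorem Mmat_commutes_and_diagonal (d : ℕ) (hd : 2 ≤ d)
    (Λ : Matrix (Fin d) (Fin d) ℝ) (hΛ : Λ.PosDef)
    (P : Matrix (Fin d) (Fin d) ℝ) (hP : P ∈ Matrix.orthogonalGroup (Fin d) ℝ)
    (D : Fin d → ℝ) (hD : Λ = Pᵀ * Matrix.diagonal D * P) :
    ∀ p : ℝ, 0 < p →
      Mmat d Λ p * Λ = Λ * Mmat d Λ p ∧
      ∃ dvec : Fin d → ℝ, P * Mmat d Λ p * Pᵀ = Matrix.diagonal dvec := fun p _ =>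
  Mmat_commutes_and_diagonal_general hΛ hP hD p
end
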